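/- arXiv:1306.2917 — 9 statements merged into one kernel-verified Lean document; each statement's English description precedes it below -/
import Mathlib

section
/- Let G be a finite weighted directed multigraph, let v₁, v₂ be vertices, and let X = X(v₁,v₂) be nonempty. Suppose there is at least one strongly connected component contained in vt(X), and that for every strongly connected component C ⊆ vt(X) the subgraph of G induced on C is a cycle. Let c be the maximum, over paths x ∈ X, of the number of distinct strongly connected components met by x (this maximum exists since the number of components is finite). Then, for any sequence of weights (p_r) for X, there exists a real number s > 0 such that lim_{r→∞} p_r^c / r = s. -/
/-!
It suffices to show that the number `N(t)` of paths of weight at most `t` satisfies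
`N(t) / t^c → K` with `K > 0` (`tendsto_of_count`); then `p_r^c / r → 1 / K`.

The asymptotics of the number `cnt v u t` of walks (the empty one included) from `u` to a fixed
vertex `v` of weight at most `t` is found by induction on the number of vertices reachable from
`u` (`hasGrowth`), with the degree tracked as the greatest number of components met by a walk.

* If `u` lies in no component, splitting off the first edge gives
  `cnt u t = [u = v] + ∑ cnt (O e) (t - W e)`, the sum running over the edges `e` leaving `u`; none
  of these edges changes the components met, and leading terms add up (`hasGrowth_of_not_mem`).
* If `u` lies in a component `C`, which is a cycle, choose a closed walk `y` at `u` inside `C`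
  through all of `C`, of weight `L`. Every vertex of `C` has only one edge inside `C`, so a walk
  from `u` either begins with `y` or leaves `C` (or stops) somewhere along `y`. Hence
  `cnt u t - cnt u (t - L)` is a sum of translates of the counting functions at the exits from `C`
  (`tendsto_cnt_sub`), of degree `d` say, and by Stolz–Cesàro and monotonicity `cnt u` has degree
  `d + 1` (`growth_of_step`). Correspondingly, walks from `u` meet exactly one more component, `C`
  itself, than what remains of them after leaving `C` (`walk_cases`).
-/

open Filter Topology

/-- A finite weighted directed multigraph `G = (V,E,I,O,W)`:
finite sets of vertices and edges, initial- and terminal-vertex maps,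
and a positive weight on each edge. -/
structure Multigraph where
  V : Type
  E : Type
  fintV : Fintype V
  fintE : Fintype E
  I : E → V
  O : E → V
  W : E → ℝ
  W_pos : ∀ e, 0 < W e

attribute [instance] Multigraph.fintV Multigraph.fintE

namespace Multigraph

variable (G : Multigraph)

/-- A path is a nonempty finite sequence of edges, the terminal vertex
of each edge being the initial vertex of the next. -/
def IsPath (x : List G.E) : Prop :=
  x ≠ [] ∧ x.Chain' fun e f => G.O e = G.I f

/-- `X(v₁,v₂)`: the set of paths from `v₁` to `v₂`. -/
def pathsFromTo (v₁ v₂ : G.V) : Set (List G.E) :=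
  {x | G.IsPath x ∧ (∃ e, x.head? = some e ∧ G.I e = v₁) ∧
    ∃ e, x.getLast? = some e ∧ G.O e = v₂}

/-- The weight `W(x)` of a path: the sum of the weights of its edges. -/
def weight (x : List G.E) : ℝ := (x.map G.W).sum

/-- `u → v`: there is a path from `u` to `v`. -/
def Reaches (u v : G.V) : Prop := (G.pathsFromTo u v).Nonempty

/-- `u ↔ v`: `u → v` and `v → u`. -/
def Comm (u v : G.V) : Prop := G.Reaches u v ∧ G.Reaches v u

/-- `vt(X(v₁,v₂))`: all vertices occurring as an endpoint of an edge of some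
path from `v₁` to `v₂`. -/
def vtOf (v₁ v₂ : G.V) : Set G.V :=
  {v | ∃ x ∈ G.pathsFromTo v₁ v₂, ∃ e ∈ x, G.I e = v ∨ G.O e = v}

/-- `C` is a strongly connected component: an equivalence class of `↔` on
`{v | v ↔ v}`. -/
def IsSCC (C : Set G.V) : Prop :=
  C.Nonempty ∧ (∀ u ∈ C, ∀ v ∈ C, G.Comm u v) ∧ ∀ u ∈ C, ∀ v, G.Comm u v → v ∈ C

/-- `p` is a sequence of weights for the set of paths `S`: the weights of the
paths of `S`, listed in nondecreasing order with one entry per path. -/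
def IsSOW (S : Set (List G.E)) (p : ℕ → ℝ) : Prop :=
  ∃ φ : ℕ → S, Function.Bijective φ ∧ (∀ r, p r = G.weight (φ r : List G.E)) ∧ Monotone p

/-- `x` is a path on the vertex set `C`. -/
def pathOn (C : Set G.V) (x : List G.E) : Prop := ∀ e ∈ x, G.I e ∈ C ∧ G.O e ∈ C

/-- The subgraph induced on `C` is a cycle: it is strongly connected and every
vertex of `C` has in-degree and out-degree `1` in the induced subgraph. -/
def IsCycleOn (C : Set G.V) : Prop :=
  (∀ u ∈ C, ∀ v ∈ C, ∃ x ∈ G.pathsFromTo u v, G.pathOn C x) ∧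
  ∀ v ∈ C, (∃! e : G.E, G.I e = v ∧ G.O e ∈ C) ∧ ∃! e : G.E, G.O e = v ∧ G.I e ∈ C

/-- The strongly connected components met by the path `x`. -/
def metComps (x : List G.E) : Set (Set G.V) :=
  {C | G.IsSCC C ∧ ∃ e ∈ x, G.I e ∈ C ∨ G.O e ∈ C}

end Multigraph

/-! ### Polynomial growth of real functions -/

section Growth

lemma tendsto_sub_div_self (a : ℝ) : Tendsto (fun t : ℝ => (t - a) / t) atTop (𝓝 1) := by
  have h : Tendsto (fun t : ℝ => 1 - a * t⁻¹) atTop (𝓝 (1 - a * 0)) :=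
    tendsto_const_nhds.sub (tendsto_inv_atTop_zero.const_mul a)
  rw [mul_zero, sub_zero] at h
  refine h.congr' ?_
  filter_upwards [eventually_gt_atTop 0] with t ht
  field_simp

/-- Translating the argument does not change the leading coefficient. -/
lemma growth_shift {f : ℝ → ℝ} {d : ℕ} {K : ℝ}
    (h : Tendsto (fun t => f t / t ^ d) atTop (𝓝 K)) (a : ℝ) :
    Tendsto (fun t => f (t - a) / t ^ d) atTop (𝓝 K) := by
  have h1 : Tendsto (fun t : ℝ => t - a) atTop atTop :=
    tendsto_atTop_add_const_right atTop (-a) tendsto_id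
  have h2 := (h.comp h1).mul ((tendsto_sub_div_self a).pow d)
  rw [one_pow, mul_one] at h2
  refine h2.congr' ?_
  filter_upwards [eventually_gt_atTop 0, eventually_gt_atTop a] with t ht hta
  have : t - a ≠ 0 := by linarith
  simp only [Function.comp]
  rw [div_pow]
  field_simp

lemma tendsto_pow_succ_sub (d : ℕ) :
    Tendsto (fun n : ℕ => (((n + 1 : ℕ) : ℝ) ^ (d + 1) - (n : ℝ) ^ (d + 1)) / ((n + 1 : ℕ) : ℝ) ^ d)
      atTop (𝓝 ((d : ℝ) + 1)) := by
  have h0 : Tendsto (fun n : ℕ => (n : ℝ) / ((n + 1 : ℕ) : ℝ)) atTop (𝓝 1) := by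
    have := tendsto_natCast_div_add_atTop (1 : ℝ)
    simpa using this
  have h1 : Tendsto (fun n : ℕ => ∑ i ∈ Finset.range (d + 1),
      ((n : ℝ) / ((n + 1 : ℕ) : ℝ)) ^ (d - i)) atTop
      (𝓝 (∑ i ∈ Finset.range (d + 1), (1 : ℝ) ^ (d - i))) :=
    tendsto_finsetSum _ fun i _ => h0.pow _
  have h2 : ∑ i ∈ Finset.range (d + 1), (1 : ℝ) ^ (d - i) = (d : ℝ) + 1 := by simp
  rw [h2] at h1
  refine h1.congr fun n => ?_
  have hn : ((n + 1 : ℕ) : ℝ) ≠ 0 := by positivity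
  have hg := geom_sum₂_mul ((n + 1 : ℕ) : ℝ) (n : ℝ) (d + 1)
  rw [← hg, Finset.sum_mul, Finset.sum_div]
  refine Finset.sum_congr rfl fun i hi => ?_
  have hid : i ≤ d := Nat.lt_succ_iff.mp (Finset.mem_range.mp hi)
  have e1 : ((n + 1 : ℕ) : ℝ) - n = 1 := by push_cast; ring
  have e2 : ((n + 1 : ℕ) : ℝ) ^ d = ((n + 1 : ℕ) : ℝ) ^ i * ((n + 1 : ℕ) : ℝ) ^ (d - i) := by
    rw [← pow_add]; congr 1; omega
  rw [e1, e2, div_pow, Nat.add_sub_cancel]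
  field_simp

/-- A Stolz–Cesàro statement: increments growing like `K (n+1)^d` sum up to growth
`K / (d+1) * n^(d+1)`. -/
lemma growth_nat_of_step {a : ℕ → ℝ} {d : ℕ} {K : ℝ}
    (h : Tendsto (fun n : ℕ => (a (n + 1) - a n) / ((n + 1 : ℕ) : ℝ) ^ d) atTop (𝓝 K)) :
    Tendsto (fun n : ℕ => a n / (n : ℝ) ^ (d + 1)) atTop (𝓝 (K / (d + 1))) := by
  have hd : (d : ℝ) + 1 ≠ 0 := by positivity
  set g : ℕ → ℝ := fun n => ((n + 1 : ℕ) : ℝ) ^ (d + 1) - (n : ℝ) ^ (d + 1) with hg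
  have hgpos : ∀ n, 0 < g n := fun n => by
    have : (n : ℝ) < ((n + 1 : ℕ) : ℝ) := by push_cast; linarith
    exact sub_pos.mpr (pow_lt_pow_left₀ this (Nat.cast_nonneg n) (Nat.succ_ne_zero d))
  have hsum : ∀ n, ∑ i ∈ Finset.range n, g i = (n : ℝ) ^ (d + 1) := fun n => by
    have := Finset.sum_range_sub (fun i : ℕ => (i : ℝ) ^ (d + 1)) n
    simpa [hg] using this
  have hq : Tendsto (fun n => (a (n + 1) - a n) / g n) atTop (𝓝 (K / (d + 1))) := by
    refine (h.div (tendsto_pow_succ_sub d) hd).congr fun n => ?_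
    have hn : ((n + 1 : ℕ) : ℝ) ≠ 0 := by positivity
    have := (hgpos n).ne'
    simp only [Pi.div_apply]
    change _ / (g n / _) = _
    field_simp
  have ho : (fun n => (a (n + 1) - a n) - K / (d + 1) * g n) =o[atTop] g := by
    rw [Asymptotics.isLittleO_iff_tendsto (fun n hn => absurd hn (hgpos n).ne')]
    have := hq.sub_const (K / (d + 1))
    rw [sub_self] at this
    refine this.congr fun n => ?_
    have := (hgpos n).ne'
    field_simp
  have htop : Tendsto (fun n : ℕ => (n : ℝ) ^ (d + 1)) atTop atTop :=
    (tendsto_pow_atTop (Nat.succ_ne_zero d)).comp tendsto_natCast_atTop_atTop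
  have hs := ho.sum_range (fun n => (hgpos n).le) (by simpa only [hsum] using htop)
  have hsa : ∀ n, ∑ i ∈ Finset.range n, (a (i + 1) - a i - K / (d + 1) * g i)
      = a n - a 0 - K / (d + 1) * (n : ℝ) ^ (d + 1) := fun n => by
    rw [Finset.sum_sub_distrib, Finset.sum_range_sub, ← Finset.mul_sum, hsum]
  simp only [hsum, hsa] at hs
  have h1 := hs.tendsto_div_nhds_zero
  have h2 : Tendsto (fun n : ℕ => a 0 / (n : ℝ) ^ (d + 1)) atTop (𝓝 0) :=
    tendsto_const_nhds.div_atTop htop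
  have h3 := (h1.add h2).add_const (K / ((d : ℝ) + 1))
  rw [add_zero, zero_add] at h3
  refine h3.congr' ?_
  filter_upwards [eventually_gt_atTop 0] with n hn
  have : (n : ℝ) ≠ 0 := by positivity
  rw [← add_div, div_add' _ _ _ (by positivity)]
  congr 1
  ring

/-- If the increments `f t - f (t - L)` of a monotone function grow like `K t^d`, then
`f` grows like `K / (L (d+1)) t^(d+1)`. -/
lemma growth_of_step {f : ℝ → ℝ} (hf : Monotone f) {L : ℝ} (hL : 0 < L) {d : ℕ} {K : ℝ}
    (h : Tendsto (fun t => (f t - f (t - L)) / t ^ d) atTop (𝓝 K)) :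
    Tendsto (fun t => f t / t ^ (d + 1)) atTop (𝓝 (K / (L * (d + 1)))) := by
  have hd : (d : ℝ) + 1 ≠ 0 := by positivity
  -- the values at the multiples of `L` are controlled by the discrete statement
  have hnat : Tendsto (fun n : ℕ => f (n * L) / (n : ℝ) ^ (d + 1)) atTop
      (𝓝 (K * L ^ d / (d + 1))) := by
    refine growth_nat_of_step (a := fun n : ℕ => f (n * L)) ?_
    have ht : Tendsto (fun n : ℕ => ((n + 1 : ℕ) : ℝ) * L) atTop atTop :=
      (tendsto_natCast_atTop_atTop.comp (tendsto_add_atTop_nat 1)).atTop_mul_const hL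
    refine ((h.comp ht).mul_const (L ^ d)).congr fun n => ?_
    have e : ((n + 1 : ℕ) : ℝ) * L - L = n * L := by push_cast; ring
    simp only [Function.comp, e, mul_pow]
    have hn : ((n + 1 : ℕ) : ℝ) ≠ 0 := by positivity
    field_simp
  have hfl : Tendsto (fun t : ℝ => (⌊t / L⌋₊ : ℝ) / t) atTop (𝓝 (1 / L)) := by
    have h1 : Tendsto (fun t : ℝ => t / L) atTop atTop := tendsto_id.atTop_div_const hL
    refine (((tendsto_nat_floor_div_atTop (R := ℝ)).comp h1).div_const L).congr fun t => ?_
    simp only [Function.comp]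
    field_simp
  have hflN : Tendsto (fun t : ℝ => ⌊t / L⌋₊) atTop atTop :=
    tendsto_nat_floor_atTop.comp (tendsto_id.atTop_div_const hL)
  have hfl1 : Tendsto (fun t : ℝ => ((⌊t / L⌋₊ + 1 : ℕ) : ℝ) / t) atTop (𝓝 (1 / L)) := by
    have := hfl.add (tendsto_inv_atTop_zero (𝕜 := ℝ))
    rw [add_zero] at this
    refine this.congr fun t => ?_
    push_cast; ring
  have hlim : K * L ^ d / (d + 1) * (1 / L) ^ (d + 1) = K / (L * (d + 1)) := by
    rw [one_div, inv_pow, pow_succ]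
    field_simp
  have lo := (hnat.comp hflN).mul (hfl.pow (d + 1))
  have up := (hnat.comp ((tendsto_add_atTop_nat 1).comp hflN)).mul (hfl1.pow (d + 1))
  rw [hlim] at lo up
  refine tendsto_of_tendsto_of_tendsto_of_le_of_le' lo up ?_ ?_
  · filter_upwards [eventually_ge_atTop L] with t ht
    have ht0 : 0 < t := hL.trans_le ht
    have hp : 0 < (⌊t / L⌋₊ : ℝ) := by
      have : 1 ≤ ⌊t / L⌋₊ := Nat.le_floor (by rw [Nat.cast_one, le_div_iff₀ hL]; linarith)
      exact_mod_cast this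
    have hle : (⌊t / L⌋₊ : ℝ) * L ≤ t := by
      rw [← le_div_iff₀ hL]; exact Nat.floor_le (by positivity)
    simp only [Function.comp, div_pow]
    rw [div_mul_div_comm, mul_comm, mul_div_mul_left _ _ (by positivity)]
    gcongr
    exact hf hle
  · filter_upwards [eventually_ge_atTop L] with t ht
    have ht0 : 0 < t := hL.trans_le ht
    have hp : 0 < ((⌊t / L⌋₊ + 1 : ℕ) : ℝ) := by positivity
    have hle : t ≤ ((⌊t / L⌋₊ + 1 : ℕ) : ℝ) * L := by
      rw [← div_le_iff₀ hL]; push_cast; exact (Nat.lt_floor_add_one _).le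
    simp only [Function.comp, div_pow]
    rw [div_mul_div_comm, mul_comm, mul_div_mul_left _ _ (by positivity)]
    gcongr
    exact hf hle

end Growth

namespace Multigraph

variable {G : Multigraph}

/-! ### Walks -/

/-- `IsWalk u x v`: the list of edges `x` leads from `u` to `v`. In contrast to paths, the
empty list is allowed, as a walk from a vertex to itself. -/
def IsWalk (u : G.V) : List G.E → G.V → Prop
  | [], v => u = v
  | e :: x, v => G.I e = u ∧ IsWalk (G.O e) x v

lemma IsWalk.append {u v w : G.V} {x y : List G.E} (hx : IsWalk u x v) (hy : IsWalk v y w) :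
    IsWalk u (x ++ y) w := by
  induction x generalizing u with
  | nil => cases hx; exact hy
  | cons e x ih => exact ⟨hx.1, ih hx.2⟩

lemma mem_pathsFromTo_iff {u v : G.V} {x : List G.E} :
    x ∈ G.pathsFromTo u v ↔ x ≠ [] ∧ IsWalk u x v := by
  induction x generalizing u with
  | nil => simp [pathsFromTo, IsPath]
  | cons e x ih =>
    cases x with
    | nil => simp [pathsFromTo, IsPath, IsWalk, List.Chain']
    | cons f x =>
      have := ih (u := G.O e)
      simp only [pathsFromTo, IsPath, IsWalk, List.Chain', Set.mem_ofPred_eq, ne_eq,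
        List.isChain_cons_cons, List.head?_cons, List.getLast?_cons_cons, Option.some.injEq,
        exists_eq_left', reduceCtorEq, not_false_eq_true, true_and] at this ⊢
      grind

lemma reaches_iff {u v : G.V} : G.Reaches u v ↔ ∃ x, x ≠ [] ∧ IsWalk u x v := by
  simp only [Reaches, Set.Nonempty, mem_pathsFromTo_iff]

lemma reaches_of_edge {e : G.E} {x : List G.E} {v : G.V} (h : IsWalk (G.O e) x v) :
    G.Reaches (G.I e) v :=
  reaches_iff.2 ⟨e :: x, by simp, rfl, h⟩

lemma Reaches.trans {u v w : G.V} (h : G.Reaches u v) (h' : G.Reaches v w) : G.Reaches u w := by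
  obtain ⟨x, hx, hxw⟩ := reaches_iff.1 h
  obtain ⟨y, -, hyw⟩ := reaches_iff.1 h'
  exact reaches_iff.2 ⟨x ++ y, by simp [hx], hxw.append hyw⟩

lemma IsWalk.trans_reaches {u v w : G.V} {x : List G.E} (h : IsWalk u x v)
    (h' : G.Reaches v w) : G.Reaches u w := by
  obtain ⟨y, hy, hyw⟩ := reaches_iff.1 h'
  exact reaches_iff.2 ⟨x ++ y, by simp [hy], h.append hyw⟩

/-! ### Strongly connected components -/

lemma IsSCC.eq {C D : Set G.V} (hC : G.IsSCC C) (hD : G.IsSCC D) {u : G.V} (hu : u ∈ C)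
    (hu' : u ∈ D) : D = C := by
  ext w
  exact ⟨fun hw => hC.2.2 u hu w (hD.2.1 u hu' w hw), fun hw => hD.2.2 u hu' w (hC.2.1 u hu w hw)⟩

lemma exists_isSCC {u : G.V} (h : G.Reaches u u) : ∃ C, G.IsSCC C ∧ u ∈ C := by
  refine ⟨{w | G.Comm u w}, ⟨⟨u, h, h⟩, ?_, ?_⟩, h, h⟩
  · intro a ha b hb
    exact ⟨ha.2.trans hb.1, hb.2.trans ha.1⟩
  · intro a ha b hb
    exact ⟨ha.1.trans hb.1, hb.2.trans ha.2⟩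

/-- A walk that has left a component through the edge `e` never returns to it. -/
lemma not_mem_of_exit {C : Set G.V} (hC : G.IsSCC C) {e : G.E} (hi : G.I e ∈ C)
    (ho : G.O e ∉ C) {x : List G.E} {w : G.V} (hx : IsWalk (G.O e) x w) : w ∉ C := by
  intro hw
  refine ho (hC.2.2 _ hi _ ⟨reaches_of_edge (x := []) rfl, ?_⟩)
  exact hx.trans_reaches (hC.2.1 w hw _ hi).1

/-- The components met by the walk `x` starting at `u`; the starting vertex counts as met,
also when `x` is empty. -/
def comps (u : G.V) (x : List G.E) : Set (Set G.V) :=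
  {C | G.IsSCC C ∧ (u ∈ C ∨ ∃ e ∈ x, G.O e ∈ C)}

lemma comps_cons {u : G.V} {e : G.E} {x : List G.E} :
    comps u (e :: x) = {C | G.IsSCC C ∧ u ∈ C} ∪ comps (G.O e) x := by
  ext C
  simp only [comps, List.mem_cons, Set.mem_union, Set.mem_ofPred_eq]
  grind

lemma comps_append {u v : G.V} {x y : List G.E} (h : IsWalk u x v) :
    comps v y ⊆ comps u (x ++ y) := by
  induction x generalizing u with
  | nil => cases h; exact subset_rfl
  | cons e x ih =>
    rw [List.cons_append, comps_cons]
    exact (ih h.2).trans Set.subset_union_right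

lemma comps_head {u : G.V} {x : List G.E} {C : Set G.V} (hC : G.IsSCC C) (hu : u ∈ C) :
    C ∈ comps u x := ⟨hC, Or.inl hu⟩

lemma metComps_eq {u v : G.V} {x : List G.E} (hx : x ≠ []) (h : IsWalk u x v) :
    G.metComps x = comps u x := by
  induction x generalizing u with
  | nil => exact absurd rfl hx
  | cons e x ih =>
    obtain ⟨rfl, h⟩ := h
    cases x with
    | nil =>
      ext C
      simp [metComps, comps]
    | cons f x =>
      have hf : G.I f = G.O e := h.1
      rw [comps_cons, ← ih (by simp) h]
      ext C
      simp only [metComps, List.mem_cons, Set.mem_union, Set.mem_ofPred_eq]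
      grind

lemma exists_walk_of_mem_comps {u v : G.V} {x : List G.E} (h : IsWalk u x v) {C : Set G.V}
    (hC : C ∈ comps u x) : ∃ y, ∃ w ∈ C, IsWalk u y w := by
  induction x generalizing u with
  | nil =>
    rcases hC.2 with h | ⟨e, he, -⟩
    · exact ⟨[], u, h, rfl⟩
    · simp at he
  | cons e x ih =>
    rw [comps_cons] at hC
    rcases hC with hC | hC
    · exact ⟨[], u, hC.2, rfl⟩
    · obtain ⟨y, w, hw, hy⟩ := ih h.2 hC
      exact ⟨e :: y, w, hw, h.1, hy⟩

lemma not_mem_comps_of_exit {C : Set G.V} (hC : G.IsSCC C) {e : G.E} (hi : G.I e ∈ C)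
    (ho : G.O e ∉ C) {x : List G.E} {w : G.V} (hx : IsWalk (G.O e) x w) :
    C ∉ comps (G.O e) x := by
  intro h
  obtain ⟨y, z, hz, hy⟩ := exists_walk_of_mem_comps hx h
  exact not_mem_of_exit hC hi ho hy hz

/-- A walk starting in a component `C` either stays in `C`, or leaves `C` once and for all
through some edge `e`; this determines the components it meets. -/
lemma walk_cases {C : Set G.V} (hC : G.IsSCC C) {u v : G.V} (hu : u ∈ C) {x : List G.E}
    (h : IsWalk u x v) :
    (v ∈ C ∧ comps u x = {C}) ∨
      ∃ e y, G.I e ∈ C ∧ G.O e ∉ C ∧ IsWalk (G.O e) y v ∧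
        comps u x = insert C (comps (G.O e) y) := by
  have key : {D | G.IsSCC D ∧ u ∈ D} = {C} := by
    ext D
    exact ⟨fun hD => hC.eq hD.1 hu hD.2, fun hD => by rw [Set.mem_singleton_iff.1 hD]; exact ⟨hC, hu⟩⟩
  induction x generalizing u with
  | nil =>
    cases h
    refine Or.inl ⟨hu, ?_⟩
    rw [← key]; simp [comps]
  | cons e x ih =>
    obtain ⟨rfl, h⟩ := h
    by_cases ho : G.O e ∈ C
    · have e1 : comps (G.I e) (e :: x) = comps (G.O e) x := by
        rw [comps_cons, key]
        exact Set.union_eq_self_of_subset_left (Set.singleton_subset_iff.2 (comps_head hC ho))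
      rw [e1]
      refine ih ho h ?_
      ext D
      exact ⟨fun hD => hC.eq hD.1 ho hD.2,
        fun hD => by rw [Set.mem_singleton_iff.1 hD]; exact ⟨hC, ho⟩⟩
    · refine Or.inr ⟨e, x, hu, ho, h, ?_⟩
      rw [comps_cons, key]
      rfl

/-- In a component that induces a cycle there is a closed walk through all its vertices. -/
lemma exists_closed_walk {C : Set G.V} (hcyc : G.IsCycleOn C) {v : G.V} (hv : v ∈ C) :
    ∃ y, y ≠ [] ∧ IsWalk v y v ∧ G.pathOn C y ∧ ∀ u ∈ C, ∃ e ∈ y, G.I e = u := by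
  classical
  suffices h : ∀ S : Finset G.V, ∃ y, y ≠ [] ∧ IsWalk v y v ∧ G.pathOn C y ∧
      ∀ u ∈ S, u ∈ C → ∃ e ∈ y, G.I e = u by
    obtain ⟨y, h1, h2, h3, h4⟩ := h Finset.univ
    exact ⟨y, h1, h2, h3, fun u hu => h4 u (Finset.mem_univ u) hu⟩
  intro S
  induction S using Finset.induction_on with
  | empty =>
    obtain ⟨y, hy, hyC⟩ := hcyc.1 v hv v hv
    rw [mem_pathsFromTo_iff] at hy
    exact ⟨y, hy.1, hy.2, hyC, by simp⟩
  | insert a S _ ih =>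
    obtain ⟨y, h1, h2, h3, h4⟩ := ih
    by_cases ha : a ∈ C
    · obtain ⟨p, hp, hpC⟩ := hcyc.1 v hv a ha
      obtain ⟨q, hq, hqC⟩ := hcyc.1 a ha v hv
      rw [mem_pathsFromTo_iff] at hp hq
      refine ⟨y ++ (p ++ q), by simp [h1], h2.append (hp.2.append hq.2), ?_, ?_⟩
      · intro e he
        simp only [List.mem_append] at he
        rcases he with he | he | he
        exacts [h3 e he, hpC e he, hqC e he]
      · intro u hu huC
        rcases Finset.mem_insert.1 hu with rfl | hu
        · cases q with
          | nil => exact absurd rfl hq.1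
          | cons e q => exact ⟨e, by simp, hq.2.1⟩
        · obtain ⟨e, he, heu⟩ := h4 u hu huC
          exact ⟨e, by simp [he], heu⟩
    · refine ⟨y, h1, h2, h3, fun u hu huC => ?_⟩
      rcases Finset.mem_insert.1 hu with rfl | hu
      · exact absurd huC ha
      · exact h4 u hu huC

/-! ### Counting walks by weight -/

/-- The walks from `u` to `v` of weight at most `t`. -/
def walks (v u : G.V) (t : ℝ) : Set (List G.E) := {x | IsWalk u x v ∧ G.weight x ≤ t}

lemma weight_nil : G.weight [] = 0 := by simp [weight]

lemma weight_cons (e : G.E) (x : List G.E) : G.weight (e :: x) = G.W e + G.weight x := by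
  simp [weight]

lemma weight_nonneg (x : List G.E) : 0 ≤ G.weight x := by
  induction x with
  | nil => simp [weight_nil]
  | cons e x ih => rw [weight_cons]; linarith [G.W_pos e]

lemma finite_weight_le (t : ℝ) : {x : List G.E | G.weight x ≤ t}.Finite := by
  obtain ⟨m, hm, hmW⟩ : ∃ m : ℝ, 0 < m ∧ ∀ e, m ≤ G.W e := by
    rcases isEmpty_or_nonempty G.E with h | h
    · exact ⟨1, one_pos, fun e => h.elim e⟩
    · obtain ⟨e, he⟩ := Finite.exists_min G.W
      exact ⟨G.W e, G.W_pos e, he⟩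
  have hlen : ∀ x : List G.E, x.length * m ≤ G.weight x := by
    intro x
    induction x with
    | nil => simp [weight_nil]
    | cons e x ih =>
      rw [weight_cons, List.length_cons]
      push_cast
      linarith [hmW e]
  refine (List.finite_length_le G.E ⌊t / m⌋₊).subset fun x hx => ?_
  refine Nat.le_floor ?_
  rw [le_div_iff₀ hm]
  exact (hlen x).trans hx

lemma finite_walks (v u : G.V) (t : ℝ) : (walks v u t).Finite :=
  (finite_weight_le t).subset fun _ hx => hx.2

/-- The number of walks from `u` to `v` of weight at most `t`, as a real number. -/
noncomputable def cnt (v u : G.V) (t : ℝ) : ℝ := (walks v u t).ncard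

lemma cnt_mono (v u : G.V) : Monotone (cnt v u) := fun _ t hst =>
  Nat.cast_le.2 (Set.ncard_le_ncard (fun _ hx => ⟨hx.1, hx.2.trans hst⟩) (finite_walks v u t))

open Classical in
/-- The contribution to `cnt v u t` of the empty walk and of the walks whose first edge
leaves `C`. -/
noncomputable def exitCnt (v : G.V) (C : Set G.V) (u : G.V) (t : ℝ) : ℝ :=
  (if u = v ∧ 0 ≤ t then 1 else 0) +
    ∑ e, if G.I e = u ∧ G.O e ∉ C then cnt v (G.O e) (t - G.W e) else 0

/-- Splitting walks according to their first edge. -/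
lemma cnt_eq_exitCnt (v u : G.V) (t : ℝ) : cnt v u t = exitCnt v ∅ u t := by
  classical
  set A : Set (List G.E) := {x | x = [] ∧ u = v ∧ 0 ≤ t} with hA
  set B : G.E → Set (List G.E) := fun e =>
    List.cons e '' {x | G.I e = u ∧ x ∈ walks v (G.O e) (t - G.W e)} with hB
  have hsplit : walks v u t = A ∪ ⋃ e, B e := by
    ext x
    cases x with
    | nil => simp [walks, hA, hB, IsWalk, weight_nil]
    | cons e x => simp [walks, hA, hB, IsWalk, weight_cons, le_sub_iff_add_le', and_assoc]
  have hBfin : ∀ e, (B e).Finite := fun e =>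
    ((finite_walks v (G.O e) (t - G.W e)).subset fun x hx => hx.2).image _
  have hAfin : A.Finite := (Set.finite_singleton []).subset fun x hx => hx.1
  have hdis : Disjoint A (⋃ e, B e) := by
    rw [Set.disjoint_left]
    rintro x ⟨rfl, -⟩ hx
    simp [hB] at hx
  have hBdis : Pairwise (Function.onFun Disjoint B) := by
    intro e f hef
    rw [Function.onFun, Set.disjoint_left]
    rintro _ ⟨x, -, rfl⟩ ⟨y, -, hy⟩
    exact hef (List.cons.inj hy).1.symm
  have hAc : (A.ncard : ℝ) = if u = v ∧ 0 ≤ t then 1 else 0 := by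
    split_ifs with h
    · have : A = {[]} := by ext x; simp [hA, h]
      simp [this]
    · have : A = ∅ := by ext x; simp only [hA, Set.mem_ofPred_eq, Set.mem_empty_iff_false]; tauto
      simp [this]
  have hBc : ∀ e, ((B e).ncard : ℝ) =
      if G.I e = u ∧ G.O e ∉ (∅ : Set G.V) then cnt v (G.O e) (t - G.W e) else 0 := by
    intro e
    simp only [hB]
    rw [Set.ncard_image_of_injective _ (List.cons_injective)]
    by_cases h : G.I e = u
    · simp [h, cnt]
    · simp [h]
  rw [cnt, hsplit, Set.ncard_union_eq hdis hAfin (Set.finite_iUnion hBfin),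
    Set.ncard_iUnion_of_finite hBfin hBdis, finsum_eq_sum_of_fintype]
  push_cast
  rw [hAc, exitCnt, Finset.sum_congr rfl fun e _ => hBc e]
  congr!

/-- In a cycle `C`, a walk starting in `C` is either counted by `exitCnt`, or its first edge is
the unique edge inside `C`. -/
lemma cnt_eq_exitCnt_add {C : Set G.V} (hcyc : G.IsCycleOn C) (v : G.V) {e : G.E}
    (hi : G.I e ∈ C) (ho : G.O e ∈ C) (t : ℝ) :
    cnt v (G.I e) t = exitCnt v C (G.I e) t + cnt v (G.O e) (t - G.W e) := by
  classical
  have huniq : ∀ f, G.I f = G.I e → G.O f ∈ C → f = e := fun f h1 h2 =>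
    (hcyc.2 _ hi).1.unique ⟨h1, h2⟩ ⟨rfl, ho⟩
  have hsingle : cnt v (G.O e) (t - G.W e) =
      ∑ f, if f = e then cnt v (G.O f) (t - G.W f) else 0 := by simp
  rw [cnt_eq_exitCnt, exitCnt, exitCnt, hsingle, add_assoc, ← Finset.sum_add_distrib]
  congr 1
  refine Finset.sum_congr rfl fun f _ => ?_
  by_cases hfe : f = e
  · subst hfe; simp [ho]
  · by_cases h1 : G.I f = G.I e
    · have : G.O f ∉ C := fun h2 => hfe (huniq f h1 h2)
      simp [h1, this, hfe]
    · simp [h1, hfe]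

open Classical in
/-- The leading coefficient, in degree `d`, of the indicator function `u = v ∧ 0 ≤ t`. -/
noncomputable def nilCoeff (v u : G.V) (d : ℕ) : ℝ := if u = v ∧ d = 0 then 1 else 0

open Classical in
/-- The leading coefficient of `exitCnt v C u` in degree `d`, given leading coefficients `K e`
for the numbers of walks starting at the end of `e`. -/
noncomputable def exitCoeff (v : G.V) (C : Set G.V) (d : ℕ) (K : G.E → ℝ) (u : G.V) : ℝ :=
  nilCoeff v u d + ∑ e, if G.I e = u ∧ G.O e ∉ C then K e else 0

lemma tendsto_exitCnt (v : G.V) (C : Set G.V) (d : ℕ) (K : G.E → ℝ) (u : G.V)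
    (h : ∀ e, G.I e = u → G.O e ∉ C →
      Tendsto (fun t => cnt v (G.O e) t / t ^ d) atTop (𝓝 (K e))) :
    Tendsto (fun t => exitCnt v C u t / t ^ d) atTop (𝓝 (exitCoeff v C d K u)) := by
  classical
  simp only [exitCnt, exitCoeff, add_div, Finset.sum_div]
  refine Tendsto.add ?_ (tendsto_finsetSum _ fun e _ => ?_)
  · by_cases huv : u = v
    · by_cases hd : d = 0
      · refine tendsto_const_nhds.congr' ?_
        filter_upwards [eventually_ge_atTop 0] with t ht
        simp [nilCoeff, huv, hd, ht]
      · have h0 : Tendsto (fun t : ℝ => 1 / t ^ d) atTop (𝓝 0) :=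
          tendsto_const_nhds.div_atTop (tendsto_pow_atTop hd)
        simp only [nilCoeff, hd, and_false, if_false]
        refine h0.congr' ?_
        filter_upwards [eventually_ge_atTop 0] with t ht
        simp [huv, ht]
    · simp [nilCoeff, huv]
  · split_ifs with he
    · exact growth_shift (h e he.1 he.2) _
    · simp

lemma exitCoeff_nonneg {v : G.V} {C : Set G.V} {d : ℕ} {K : G.E → ℝ} (u : G.V)
    (h : ∀ e, 0 ≤ K e) : 0 ≤ exitCoeff v C d K u := by
  classical
  refine add_nonneg (by unfold nilCoeff; split_ifs <;> simp) (Finset.sum_nonneg fun e _ => ?_)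
  split_ifs
  exacts [h e, le_rfl]

lemma exitCoeff_pos_of_nil {v : G.V} {C : Set G.V} {K : G.E → ℝ}
    (h : ∀ e, 0 ≤ K e) : 0 < exitCoeff v C 0 K v := by
  classical
  refine add_pos_of_pos_of_nonneg (by simp [nilCoeff]) (Finset.sum_nonneg fun e _ => ?_)
  split_ifs
  exacts [h e, le_rfl]

lemma exitCoeff_pos_of_edge {v : G.V} {C : Set G.V} {d : ℕ} {K : G.E → ℝ}
    (h : ∀ e, 0 ≤ K e) {e : G.E} (ho : G.O e ∉ C) (he : 0 < K e) :
    0 < exitCoeff v C d K (G.I e) := by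
  classical
  refine add_pos_of_nonneg_of_pos (by unfold nilCoeff; split_ifs <;> simp)
    (Finset.sum_pos' (fun f _ => ?_) ⟨e, Finset.mem_univ e, by simpa [ho] using he⟩)
  split_ifs
  exacts [h f, le_rfl]

/-- Following a walk `y` inside a cycle `C`, the walks that do not begin with `y` stop or
leave `C` at the initial vertex of one of the edges of `y`. -/
lemma tendsto_cnt_sub {C : Set G.V} (hcyc : G.IsCycleOn C) (v : G.V) {d : ℕ} {K : G.V → ℝ}
    (hK : ∀ u ∈ C, Tendsto (fun t => exitCnt v C u t / t ^ d) atTop (𝓝 (K u)))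
    {u w : G.V} {y : List G.E} (hy : IsWalk u y w) (hyC : G.pathOn C y) :
    Tendsto (fun t => (cnt v u t - cnt v w (t - G.weight y)) / t ^ d) atTop
      (𝓝 (y.map fun e => K (G.I e)).sum) := by
  induction y generalizing u with
  | nil => cases hy; simp [weight_nil]
  | cons e y ih =>
    obtain ⟨rfl, hy⟩ := hy
    have heC := hyC e (by simp)
    have h1 := ih hy fun f hf => hyC f (by simp [hf])
    have h2 := (hK _ heC.1).add (growth_shift
      (f := fun t => cnt v (G.O e) t - cnt v w (t - G.weight y)) h1 (G.W e))
    rw [List.map_cons, List.sum_cons]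
    refine h2.congr fun t => ?_
    rw [cnt_eq_exitCnt_add hcyc v heC.1 heC.2, weight_cons, ← add_div, sub_sub]
    congr 1
    ring

/-! ### The order of growth of the number of walks -/

/-- The conclusion of the growth theorem at `u`: if no walk from `u` to `v` meets more than `d`
components, then the number of walks has a leading coefficient in degree `d`, which is positive
as soon as some walk meets exactly `d` components. -/
def HasGrowth (v u : G.V) : Prop :=
  ∀ d : ℕ, (∀ x, IsWalk u x v → (comps u x).ncard ≤ d) →
    ∃ K : ℝ, 0 ≤ K ∧ Tendsto (fun t => cnt v u t / t ^ d) atTop (𝓝 K) ∧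
      ((∃ x, IsWalk u x v ∧ (comps u x).ncard = d) → 0 < K)

lemma hasGrowth_of_not_mem {v u : G.V} (hu : ¬ G.Reaches u u)
    (ih : ∀ e, G.I e = u → HasGrowth v (G.O e)) : HasGrowth v u := by
  intro d hd
  have hnil : {C | G.IsSCC C ∧ u ∈ C} = ∅ := by
    ext C
    simp only [Set.mem_ofPred_eq, Set.mem_empty_iff_false, iff_false]
    exact fun h => hu (h.1.2.1 u h.2 u h.2).1
  have hcons : ∀ e x, comps u (e :: x) = comps (G.O e) x := fun e x => by
    rw [comps_cons, hnil, Set.empty_union]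
  have hK : ∀ e, ∃ K : ℝ, 0 ≤ K ∧ (G.I e = u →
      Tendsto (fun t => cnt v (G.O e) t / t ^ d) atTop (𝓝 K) ∧
      ((∃ x, IsWalk (G.O e) x v ∧ (comps (G.O e) x).ncard = d) → 0 < K)) := by
    intro e
    by_cases he : G.I e = u
    · obtain ⟨K, h1, h2⟩ := ih e he d fun x hx => by
        rw [← hcons]; exact hd (e :: x) ⟨he, hx⟩
      exact ⟨K, h1, fun _ => h2⟩
    · exact ⟨0, le_rfl, fun h => absurd h he⟩
  choose K hK0 hK using hK
  refine ⟨exitCoeff v ∅ d K u, exitCoeff_nonneg u hK0, ?_, ?_⟩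
  · refine (tendsto_exitCnt v ∅ d K u fun e he _ => (hK e he).1).congr fun t => ?_
    rw [cnt_eq_exitCnt]
  · rintro ⟨x, hx, hxd⟩
    cases x with
    | nil =>
      have h0 : comps u [] = ∅ := by rw [← hnil]; simp [comps]
      rw [h0, Set.ncard_empty] at hxd
      subst hxd
      cases hx
      exact exitCoeff_pos_of_nil hK0
    | cons e x =>
      obtain ⟨rfl, hx⟩ := hx
      rw [hcons] at hxd
      exact exitCoeff_pos_of_edge hK0 (by simp) ((hK e rfl).2 ⟨x, hx, hxd⟩)

lemma hasGrowth_of_no_walk {v u : G.V} (h : ∀ x, ¬ IsWalk u x v) : HasGrowth v u := by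
  intro d _
  have : ∀ t, cnt v u t = 0 := fun t => by
    have : walks v u t = ∅ := by
      ext x; simp [walks, h x]
    simp [cnt, this]
  exact ⟨0, le_rfl, by simp [this], fun ⟨x, hx, _⟩ => absurd hx (h x)⟩

/-- Around a cycle of weight `L`, the increments `cnt t - cnt (t - L)` are governed by the exits
from the cycle, so the cycle raises the degree of growth by one. -/
lemma hasGrowth_of_mem {v u : G.V} {C : Set G.V} (hC : G.IsSCC C) (hu : u ∈ C)
    (hcyc : G.IsCycleOn C)
    (ih : ∀ e, G.I e ∈ C → G.O e ∉ C → HasGrowth v (G.O e)) : HasGrowth v u := by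
  by_cases hw : ∀ x, ¬ IsWalk u x v
  · exact hasGrowth_of_no_walk hw
  push Not at hw
  obtain ⟨x₀, hx₀⟩ := hw
  intro d hd
  have hd0 : 0 < d := lt_of_lt_of_le
    ((Set.ncard_pos (Set.toFinite _)).2 ⟨C, comps_head hC hu⟩) (hd x₀ hx₀)
  obtain ⟨d, rfl⟩ : ∃ d', d = d' + 1 := ⟨d - 1, by omega⟩
  obtain ⟨y, hy0, hy, hyC, hycov⟩ := exists_closed_walk hcyc hu
  have hins : ∀ e x, G.I e ∈ C → G.O e ∉ C → IsWalk (G.O e) x v →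
      (insert C (comps (G.O e) x)).ncard = (comps (G.O e) x).ncard + 1 := fun e x hi ho hx =>
    Set.ncard_insert_of_notMem (not_mem_comps_of_exit hC hi ho hx) (Set.toFinite _)
  have hK : ∀ e, ∃ K : ℝ, 0 ≤ K ∧ (G.I e ∈ C → G.O e ∉ C →
      Tendsto (fun t => cnt v (G.O e) t / t ^ d) atTop (𝓝 K) ∧
      ((∃ x, IsWalk (G.O e) x v ∧ (comps (G.O e) x).ncard = d) → 0 < K)) := by
    intro e
    by_cases he : G.I e ∈ C ∧ G.O e ∉ C
    · obtain ⟨K, h1, h2⟩ := ih e he.1 he.2 d fun x hx => by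
        obtain ⟨q, hq, -⟩ := hcyc.1 u hu _ he.1
        have hqw := (mem_pathsFromTo_iff.1 hq).2
        have hb := hd (q ++ e :: x) (hqw.append ⟨rfl, hx⟩)
        have hsub : insert C (comps (G.O e) x) ⊆ comps u (q ++ e :: x) := by
          refine Set.insert_subset (comps_head hC hu) (subset_trans ?_ (comps_append hqw))
          rw [comps_cons]
          exact Set.subset_union_right
        have := Set.ncard_le_ncard hsub (Set.toFinite _)
        rw [hins e x he.1 he.2 hx] at this
        omega
      exact ⟨K, h1, fun _ _ => h2⟩
    · exact ⟨0, le_rfl, fun h1 h2 => absurd ⟨h1, h2⟩ he⟩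
  choose K hK0 hK using hK
  have hL : 0 < G.weight y := by
    cases y with
    | nil => exact absurd rfl hy0
    | cons e y => rw [weight_cons]; linarith [G.W_pos e, weight_nonneg y]
  have hstep := tendsto_cnt_sub hcyc v (d := d) (K := exitCoeff v C d K)
    (fun w hw => tendsto_exitCnt v C d K w fun e he ho => (hK e (he ▸ hw) ho).1) hy hyC
  have hlim := growth_of_step (cnt_mono v u) hL hstep
  have hnn : ∀ r ∈ y.map (fun e => exitCoeff v C d K (G.I e)), (0 : ℝ) ≤ r := by
    intro r hr
    obtain ⟨e, -, rfl⟩ := List.mem_map.1 hr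
    exact exitCoeff_nonneg _ hK0
  refine ⟨_, div_nonneg (List.sum_nonneg hnn) (by positivity), hlim, ?_⟩
  rintro ⟨x, hx, hxd⟩
  refine div_pos ?_ (by positivity)
  -- it suffices to find one vertex of `C` with a positive exit coefficient
  obtain ⟨w, hwC, hwpos⟩ : ∃ w ∈ C, 0 < exitCoeff v C d K w := by
    rcases walk_cases hC hu hx with ⟨hv, hc⟩ | ⟨e, z, hi, ho, hz, hc⟩
    · rw [hc, Set.ncard_singleton] at hxd
      obtain rfl : d = 0 := by omega
      exact ⟨v, hv, exitCoeff_pos_of_nil hK0⟩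
    · rw [hc, hins e z hi ho hz] at hxd
      exact ⟨_, hi, exitCoeff_pos_of_edge hK0 ho ((hK e hi ho).2 ⟨z, hz, by omega⟩)⟩
  obtain ⟨e, he, rfl⟩ := hycov w hwC
  exact hwpos.trans_le (List.single_le_sum hnn _ (List.mem_map.2 ⟨e, he, rfl⟩))

/-- The growth theorem at `u`, provided that every component containing a vertex that is reachable
from `u` and leads to `v` is a cycle; by induction on the number of vertices reachable from `u`. -/
lemma hasGrowth (v : G.V) (u : G.V)
    (hgood : ∀ w x y C, IsWalk u x w → IsWalk w y v → G.IsSCC C → w ∈ C → G.IsCycleOn C) :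
    HasGrowth v u := by
  induction hn : {w | ∃ x, IsWalk u x w}.ncard using Nat.strong_induction_on generalizing u with
  | _ n IH =>
  subst hn
  -- a vertex reachable from `u` that does not lead back to `u` reaches fewer vertices than `u`
  have hrec : ∀ u' x, IsWalk u x u' → (∀ y, ¬ IsWalk u' y u) → HasGrowth v u' := by
    intro u' x hx hno
    refine IH _ ?_ u' (fun w a b C ha hb hC hw => hgood w (x ++ a) b C (hx.append ha) hb hC hw) rfl
    refine Set.ncard_lt_ncard ((Set.ssubset_iff_of_subset ?_).2 ⟨u, ⟨[], rfl⟩, ?_⟩) (Set.toFinite _)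
    · rintro w ⟨a, ha⟩
      exact ⟨x ++ a, hx.append ha⟩
    · rintro ⟨a, ha⟩
      exact hno a ha
  by_cases hu : G.Reaches u u
  · obtain ⟨C, hC, huC⟩ := exists_isSCC hu
    by_cases hw : ∀ x, ¬ IsWalk u x v
    · exact hasGrowth_of_no_walk hw
    push Not at hw
    obtain ⟨x₀, hx₀⟩ := hw
    have hcyc := hgood u [] x₀ C rfl hx₀ hC huC
    refine hasGrowth_of_mem hC huC hcyc fun e hi ho => ?_
    obtain ⟨q, hq, -⟩ := hcyc.1 u huC _ hi
    have hqw := (mem_pathsFromTo_iff.1 hq).2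
    exact hrec _ (q ++ [e]) (hqw.append ⟨rfl, rfl⟩) fun y hy => not_mem_of_exit hC hi ho hy huC
  · refine hasGrowth_of_not_mem hu fun e he => hrec _ [e] ⟨he, rfl⟩ fun y hy => hu ?_
    have := reaches_of_edge hy
    rwa [he] at this

/-- Every component through a vertex between `v₁` and `v₂` lies in `vt(X(v₁,v₂))`. -/
lemma subset_vtOf {v₁ v₂ w : G.V} {x y : List G.E} {C : Set G.V} (hx : IsWalk v₁ x w)
    (hy : IsWalk w y v₂) (hC : G.IsSCC C) (hw : w ∈ C) : C ⊆ G.vtOf v₁ v₂ := by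
  intro z hz
  obtain ⟨h1, h2⟩ := hC.2.1 w hw z hz
  obtain ⟨a, -, ha⟩ := reaches_iff.1 h1
  obtain ⟨b, hb0, hb⟩ := reaches_iff.1 h2
  cases b with
  | nil => exact absurd rfl hb0
  | cons e b =>
    refine ⟨x ++ (a ++ ((e :: b) ++ y)), mem_pathsFromTo_iff.2 ⟨by simp, ?_⟩, e, by simp,
      Or.inl hb.1⟩
    exact hx.append (ha.append (hb.append hy))

/-! ### From counting functions to sequences of weights -/

/-- If a counting function `N` with leading term `K t^c` satisfies `N (p r - 1) ≤ r + 1 ≤ N (p r)`,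
then `p r ^ c` is asymptotic to `r / K`. -/
lemma tendsto_of_count {N : ℝ → ℝ} (hN : Monotone N) {c : ℕ} {K : ℝ} (hK : 0 < K)
    (h : Tendsto (fun t => N t / t ^ c) atTop (𝓝 K)) {p : ℕ → ℝ} (hp : Monotone p)
    (h1 : ∀ r : ℕ, (r : ℝ) + 1 ≤ N (p r)) (h2 : ∀ r : ℕ, N (p r - 1) ≤ (r : ℝ) + 1) :
    Tendsto (fun r : ℕ => p r ^ c / (r : ℝ)) atTop (𝓝 K⁻¹) := by
  have hptop : Tendsto p atTop atTop := by
    refine tendsto_atTop_atTop_of_monotone hp fun b => ?_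
    by_contra! hb
    obtain ⟨n, hn⟩ := exists_nat_gt (N b)
    linarith [h1 n, hN (hb n).le]
  have hq : Tendsto (fun r : ℕ => ((r : ℝ) + 1) / p r ^ c) atTop (𝓝 K) := by
    refine tendsto_of_tendsto_of_tendsto_of_le_of_le' ((growth_shift h 1).comp hptop)
      (h.comp hptop) ?_ ?_
    · filter_upwards [hptop.eventually_gt_atTop 0] with r hr
      simp only [Function.comp]
      gcongr
      exact h2 r
    · filter_upwards [hptop.eventually_gt_atTop 0] with r hr
      simp only [Function.comp]
      gcongr
      exact h1 r
  have hr : Tendsto (fun r : ℕ => ((r : ℝ) / (r + 1))⁻¹) atTop (𝓝 1) := by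
    simpa using (tendsto_natCast_div_add_atTop (1 : ℝ)).inv₀ one_ne_zero
  have := (hq.inv₀ hK.ne').mul hr
  rw [mul_one] at this
  refine this.congr fun r => ?_
  have : (r : ℝ) + 1 ≠ 0 := by positivity
  rw [inv_div, inv_div, div_mul_div_cancel₀ this]

end Multigraph

open Multigraph in
/-- if `X(v₁,v₂)` is nonempty, there is at least one strongly
connected component contained in `vt(X)`, and every strongly connected component
contained in `vt(X)` induces a cycle, then, with `c` the greatest number of
components met by a path of `X`, any sequence of weights `(p_r)` for `X`
satisfies `lim_{r→∞} p_r ^ c / r = s` for some real `s > 0`. -/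
theorem stmt2 (G : Multigraph) (v₁ v₂ : G.V)
    (hne : (G.pathsFromTo v₁ v₂).Nonempty)
    (hex : ∃ C : Set G.V, G.IsSCC C ∧ C ⊆ G.vtOf v₁ v₂)
    (hcyc : ∀ C : Set G.V, G.IsSCC C → C ⊆ G.vtOf v₁ v₂ → G.IsCycleOn C)
    (c : ℕ)
    (hcmax : (∃ x ∈ G.pathsFromTo v₁ v₂, (G.metComps x).ncard = c) ∧
      ∀ x ∈ G.pathsFromTo v₁ v₂, (G.metComps x).ncard ≤ c)
    (p : ℕ → ℝ) (hp : G.IsSOW (G.pathsFromTo v₁ v₂) p) :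
    ∃ s : ℝ, 0 < s ∧ Tendsto (fun r : ℕ => p r ^ c / (r : ℝ)) atTop (nhds s) := by
  obtain ⟨φ, hφ, hpφ, hmono⟩ := hp
  have hφw : ∀ r, (φ r : List G.E) ≠ [] ∧ IsWalk v₁ (φ r) v₂ := fun r =>
    mem_pathsFromTo_iff.1 (φ r).2
  obtain ⟨⟨x₀, hx₀, hx₀c⟩, hmax⟩ := hcmax
  have hx₀' := mem_pathsFromTo_iff.1 hx₀
  -- the empty walk, present if `v₁ = v₂`, meets no further component
  have hbound : ∀ x, IsWalk v₁ x v₂ → (comps v₁ x).ncard ≤ c := by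
    intro x hx
    cases x with
    | nil =>
      rw [← hx₀c, metComps_eq hx₀'.1 hx₀'.2]
      refine Set.ncard_le_ncard ?_ (Set.toFinite _)
      rintro C ⟨hC, h | ⟨e, he, -⟩⟩
      · exact comps_head hC h
      · simp at he
    | cons e x =>
      rw [← metComps_eq (by simp) hx]
      exact hmax _ (mem_pathsFromTo_iff.2 ⟨by simp, hx⟩)
  obtain ⟨K, -, hK, hKpos⟩ := hasGrowth v₂ v₁ (fun w x y C hx hy hC hw =>
    hcyc C hC (subset_vtOf hx hy hC hw)) c hbound
  have hK0 : 0 < K := hKpos ⟨x₀, hx₀'.2, by rw [← metComps_eq hx₀'.1 hx₀'.2, hx₀c]⟩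
  have hinj : Function.Injective fun r => (φ r : List G.E) :=
    Subtype.val_injective.comp hφ.1
  refine ⟨K⁻¹, inv_pos.2 hK0, tendsto_of_count (cnt_mono v₂ v₁) hK0 hK hmono ?_ ?_⟩
  · intro r
    have hsub : (fun r => (φ r : List G.E)) '' (Finset.range (r + 1) : Set ℕ) ⊆
        walks v₂ v₁ (p r) := by
      rintro _ ⟨i, hi, rfl⟩
      refine ⟨(hφw i).2, ?_⟩
      rw [← hpφ]
      exact hmono (Nat.lt_succ_iff.1 (Finset.mem_range.1 hi))
    have := Set.ncard_le_ncard hsub (finite_walks _ _ _)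
    rw [Set.ncard_image_of_injective _ hinj, Set.ncard_coe_finset, Finset.card_range] at this
    unfold cnt
    exact_mod_cast this
  · intro r
    -- the summand `1` accounts for the empty walk
    have hsub : walks v₂ v₁ (p r - 1) ⊆
        insert [] ((fun r => (φ r : List G.E)) '' (Finset.range r : Set ℕ)) := by
      rintro x ⟨hx, hxw⟩
      by_cases hx0 : x = []
      · exact Or.inl hx0
      · obtain ⟨i, hi⟩ := hφ.2 ⟨x, mem_pathsFromTo_iff.2 ⟨hx0, hx⟩⟩
        refine Or.inr ⟨i, ?_, by simp [hi]⟩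
        rw [Finset.mem_coe, Finset.mem_range]
        by_contra! hri
        have h1 := hmono hri
        rw [hpφ i, hi] at h1
        linarith
    have h1 := Set.ncard_le_ncard hsub
      (((Finset.finite_toSet _).image _).insert _)
    have h2 := h1.trans (Set.ncard_insert_le _ _)
    rw [Set.ncard_image_of_injective _ hinj, Set.ncard_coe_finset, Finset.card_range] at h2
    unfold cnt
    exact_mod_cast h2
end

section
/- Let G be a finite weighted directed multigraph that is a cycle, and let w₀ = Σ_{e ∈ E} W(e) be the cycle weight (the weight of any path going exactly once around the cycle). Let v₁, v₂ be vertices of G and let (p_r) be a sequence of weights for X(v₁,v₂). Then lim_{r→∞} p_r / r = w₀; indeed p_r = w₂₁ + w₀·(r−1) for all r ≥ 1, where w₂₁ is the weight of the shortest path from v₁ to v₂. -/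
/-!
On a cycle every edge `e` has exactly one successor `s e`, the edge leaving the terminal vertex of
`e`, so a path is determined by its first edge and its length: the paths from `v₁` are the lists
`e₀, s e₀, …, s^k e₀`, where `e₀` is the edge leaving `v₁` (`mem_pathsFromTo_iff`). Such a path ends
at `v₂` iff `s^k e₀` is the edge `f` entering `v₂`.

In-degree one makes `s` injective, and strong connectivity makes the `s`-orbit of `e₀` all of `E`.
Hence with `N` the minimal period of `e₀` and `m` the first time at which the orbit hits `f`, the
admissible `k` are exactly `m + N * r` (`iterate_eq_iff_of_minimal`), and `N` consecutive edges of
the orbit have total weight `w₀` (`sum_range_period`). So the weights of the paths in `X(v₁,v₂)` are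
`c + w₀ * r`, `r ∈ ℕ`, with distinct paths having distinct weights. A nondecreasing enumeration `p`
is then strictly increasing, with the same range as the strictly increasing `r ↦ c + w₀ * r`, and
two strictly increasing sequences with the same range are equal.
-/

open Filter Topology

namespace Multigraph

variable {G : Multigraph} {s : G.E → G.E}

/-- Paths follow the successor map: with first edge `e`, they are the initial orbit segments. -/
lemma isChain_cons_iff (hs : ∀ e f, G.O e = G.I f ↔ f = s e) (x : List G.E) (e : G.E) :
    (e :: x).IsChain (fun e f => G.O e = G.I f) ↔ e :: x = List.iterate s e (x.length + 1) := by
  induction x generalizing e with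
  | nil => simp [List.iterate]
  | cons a x ih =>
    rw [List.isChain_cons_cons, hs, ih]
    simp only [List.length_cons, List.iterate, List.cons.injEq, true_and]
    constructor
    · rintro ⟨rfl, h⟩
      exact ⟨rfl, h⟩
    · rintro ⟨rfl, h⟩
      exact ⟨rfl, h⟩

lemma getLast?_iterate (s : G.E → G.E) (e : G.E) (k : ℕ) :
    (List.iterate s e (k + 1)).getLast? = some (s^[k] e) := by
  rw [← List.range_map_iterate, List.range_succ]
  simp

lemma weight_iterate (s : G.E → G.E) (e : G.E) (n : ℕ) :
    G.weight (List.iterate s e n) = ∑ i ∈ Finset.range n, G.W (s^[i] e) := by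
  rw [← List.range_map_iterate, weight, Finset.sum_range, List.map_map, ← List.sum_ofFn]
  congr 1
  apply List.ext_getElem <;> simp

lemma mem_pathsFromTo_iff_s5 (hs : ∀ e f, G.O e = G.I f ↔ f = s e) {v₁ v₂ : G.V} {e₀ f : G.E}
    (he₀ : ∀ e, G.I e = v₁ ↔ e = e₀) (hf : ∀ e, G.O e = v₂ ↔ e = f) (x : List G.E) :
    x ∈ G.pathsFromTo v₁ v₂ ↔ ∃ k, x = List.iterate s e₀ (k + 1) ∧ s^[k] e₀ = f := by
  constructor
  · rintro ⟨⟨hne, hch⟩, ⟨a, ha, hav⟩, ⟨b, hb, hbv⟩⟩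
    rw [he₀] at hav
    rw [hf] at hbv
    subst hav hbv
    cases x with
    | nil => exact absurd rfl hne
    | cons c x =>
      simp only [List.head?_cons, Option.some.injEq] at ha
      subst ha
      have h := (isChain_cons_iff hs x c).1 hch
      refine ⟨x.length, h, ?_⟩
      rw [h, getLast?_iterate] at hb
      exact Option.some.inj hb
  · rintro ⟨k, rfl, hk⟩
    refine ⟨⟨by simp [List.iterate], ?_⟩, ⟨e₀, by simp [List.iterate], (he₀ _).2 rfl⟩,
      ⟨f, by rw [getLast?_iterate, hk], (hf _).2 rfl⟩⟩
    have h := isChain_cons_iff hs (List.iterate s (s e₀) k) e₀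
    rw [List.length_iterate] at h
    exact h.2 rfl

/-- If `m` is the first time the orbit of `e` hits `f`, the hitting times are `m` plus the multiples
of the period. -/
lemma iterate_eq_iff_of_minimal (hinj : Function.Injective s) {e f : G.E} {m : ℕ}
    (hm : s^[m] e = f) (hmin : ∀ k, s^[k] e = f → m ≤ k) (k : ℕ) :
    s^[k] e = f ↔ ∃ r, k = m + Function.minimalPeriod s e * r := by
  constructor
  · intro hk
    obtain ⟨d, rfl⟩ := Nat.exists_eq_add_of_le (hmin k hk)
    have hd : Function.IsPeriodicPt s d e := by
      apply hinj.iterate m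
      rw [← Function.iterate_add_apply, hk, hm]
    obtain ⟨r, hr⟩ := hd.minimalPeriod_dvd
    exact ⟨r, by rw [hr]⟩
  · rintro ⟨r, rfl⟩
    rw [Function.iterate_add_apply,
      ((Function.isPeriodicPt_minimalPeriod s e).mul_const r).eq, hm]

/-- One full period of a transitive orbit, started anywhere, runs through every edge once. -/
lemma sum_range_period (hinj : Function.Injective s) {e : G.E}
    (hsurj : ∀ f, ∃ k, s^[k] e = f) (k : ℕ) :
    ∑ i ∈ Finset.range (Function.minimalPeriod s e), G.W (s^[k + i] e) = ∑ f, G.W f := by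
  have hpos : 0 < Function.minimalPeriod s e :=
    Function.minimalPeriod_pos_of_mem_periodicPts (hinj.mem_periodicPts e)
  have hbij : Function.Bijective s^[k] := Finite.injective_iff_bijective.1 (hinj.iterate k)
  rw [← hbij.sum_comp G.W]
  refine Finset.sum_bij (fun i _ => s^[i] e) (fun _ _ => Finset.mem_univ _) ?_ ?_ ?_
  · intro a ha b hb hab
    exact Function.iterate_injOn_Iio_minimalPeriod (Finset.mem_range.1 ha)
      (Finset.mem_range.1 hb) hab
  · intro f _
    obtain ⟨j, rfl⟩ := hsurj f
    exact ⟨j % Function.minimalPeriod s e, Finset.mem_range.2 (Nat.mod_lt _ hpos),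
      Function.iterate_mod_minimalPeriod_eq⟩
  · intro i _
    rw [Function.iterate_add_apply]

lemma sum_range_add_period_mul (hinj : Function.Injective s) {e : G.E}
    (hsurj : ∀ f, ∃ k, s^[k] e = f) (n r : ℕ) :
    ∑ i ∈ Finset.range (n + Function.minimalPeriod s e * r), G.W (s^[i] e) =
      ∑ i ∈ Finset.range n, G.W (s^[i] e) + (∑ f, G.W f) * r := by
  induction r with
  | zero => simp
  | succ r ih =>
    rw [Nat.mul_succ, ← Nat.add_assoc, Finset.sum_range_add, ih, sum_range_period hinj hsurj]
    push_cast
    ring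

end Multigraph

/-- if `G` is a cycle with cycle weight `w₀ = Σ_e W(e)`, `v₁ v₂`
are vertices, `w₂₁` is the weight of the shortest path from `v₁` to `v₂`, and
`(p_r)` is a sequence of weights for `X(v₁,v₂)`, then `lim_{r→∞} p_r / r = w₀`;
indeed `p_r = w₂₁ + w₀·r` for every `r` (`0`-based enumeration, i.e.
`p_r = w₂₁ + w₀·(r−1)` in `1`-based form). -/
theorem stmt5 (G : Multigraph)
    (hsc : ∀ u v : G.V, G.Reaches u v)
    (hdeg : ∀ v : G.V, (∃! e : G.E, G.I e = v) ∧ ∃! e : G.E, G.O e = v)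
    (w0 : ℝ) (hw0 : w0 = ∑ e : G.E, G.W e)
    (v₁ v₂ : G.V)
    (w21 : ℝ) (hw21 : IsLeast (G.weight '' G.pathsFromTo v₁ v₂) w21)
    (p : ℕ → ℝ) (hp : G.IsSOW (G.pathsFromTo v₁ v₂) p) :
    Tendsto (fun r : ℕ => p r / (r : ℝ)) atTop (nhds w0) ∧
      ∀ r : ℕ, p r = w21 + w0 * r := by
  obtain ⟨φ, hφ, hpφ, hmono⟩ := hp
  choose nxt hnxt hnxt' using fun v => (hdeg v).1
  choose prv hprv hprv' using fun v => (hdeg v).2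
  -- The successor map: the unique edge leaving the terminal vertex of `e`.
  let s : G.E → G.E := fun e => nxt (G.O e)
  have hI : ∀ v e, G.I e = v ↔ e = nxt v := fun v e =>
    ⟨fun h => hnxt' v e h, fun h => h ▸ hnxt v⟩
  have hO : ∀ v e, G.O e = v ↔ e = prv v := fun v e =>
    ⟨fun h => hprv' v e h, fun h => h ▸ hprv v⟩
  have hs : ∀ e f, G.O e = G.I f ↔ f = s e := fun e f => by rw [eq_comm, hI]
  have hinj : Function.Injective s := fun a b hab => by
    have h : G.O a = G.O b := ((hs a (s a)).2 rfl).trans ((hs b (s a)).2 hab).symm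
    rw [hO] at h
    exact h.trans ((hO _ b).1 rfl).symm
  set e₀ := nxt v₁
  have hmem := fun v => G.mem_pathsFromTo_iff_s5 hs (hI v₁) (hO v)
  have hsurj : ∀ f, ∃ k, s^[k] e₀ = f := fun f => by
    obtain ⟨x, hx⟩ := hsc v₁ (G.O f)
    obtain ⟨k, -, hk⟩ := (hmem _ x).1 hx
    exact ⟨k, hk.trans ((hO _ f).1 rfl).symm⟩
  classical
  let m := Nat.find (hsurj (prv v₂))
  have hiter := G.iterate_eq_iff_of_minimal hinj (Nat.find_spec (hsurj (prv v₂)))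
    (fun k hk => Nat.find_min' _ hk)
  let N := Function.minimalPeriod s e₀
  let c := ∑ i ∈ Finset.range (m + 1), G.W (s^[i] e₀)
  have hpath : ∀ x, x ∈ G.pathsFromTo v₁ v₂ ↔ ∃ r, x = List.iterate s e₀ (m + 1 + N * r) := by
    intro x
    rw [hmem]
    constructor
    · rintro ⟨k, rfl, hk⟩
      obtain ⟨r, rfl⟩ := (hiter k).1 hk
      exact ⟨r, by rw [Nat.add_right_comm]⟩
    · rintro ⟨r, rfl⟩
      exact ⟨m + N * r, by rw [Nat.add_right_comm], (hiter _).2 ⟨r, rfl⟩⟩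
  have hwt : ∀ r : ℕ, G.weight (List.iterate s e₀ (m + 1 + N * r)) = c + w0 * r := fun r => by
    rw [G.weight_iterate, G.sum_range_add_period_mul hinj hsurj, hw0]
  have hw0pos : 0 < w0 := by
    rw [hw0]
    exact Finset.sum_pos (fun e _ => G.W_pos e) ⟨e₀, Finset.mem_univ _⟩
  have hq : StrictMono fun r : ℕ => c + w0 * (r : ℝ) := fun a b hab => by
    have : (a : ℝ) < b := by exact_mod_cast hab
    simpa using mul_lt_mul_of_pos_left this hw0pos
  have hpinj : Function.Injective p := fun a b hab => by
    apply hφ.1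
    apply Subtype.ext
    rw [hpφ, hpφ] at hab
    obtain ⟨i, hi⟩ := (hpath _).1 (φ a).2
    obtain ⟨j, hj⟩ := (hpath _).1 (φ b).2
    rw [hi, hj, hwt, hwt] at hab
    rw [hi, hj, hq.injective hab]
  have hrange : Set.range p = Set.range fun r : ℕ => c + w0 * (r : ℝ) := by
    ext y
    constructor
    · rintro ⟨a, rfl⟩
      obtain ⟨i, hi⟩ := (hpath _).1 (φ a).2
      exact ⟨i, by rw [hpφ, hi, hwt]⟩
    · rintro ⟨r, rfl⟩
      obtain ⟨a, ha⟩ := hφ.2 ⟨_, (hpath _).2 ⟨r, rfl⟩⟩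
      exact ⟨a, by rw [hpφ, ha, hwt]⟩
  have hpq : p = fun r : ℕ => c + w0 * (r : ℝ) :=
    ((hmono.strictMono_of_injective hpinj).range_inj hq).1 hrange
  have hc : w21 = c := by
    refine hw21.unique ⟨⟨_, (hpath _).2 ⟨0, rfl⟩, by simpa using hwt 0⟩, ?_⟩
    rintro _ ⟨x, hx, rfl⟩
    obtain ⟨r, rfl⟩ := (hpath x).1 hx
    rw [hwt]
    have : 0 ≤ w0 * (r : ℝ) := by positivity
    linarith
  have hform : ∀ r : ℕ, p r = w21 + w0 * r := fun r => by rw [hpq, hc]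
  refine ⟨?_, hform⟩
  have hlim : Tendsto (fun r : ℕ => w21 / (r : ℝ) + w0) atTop (nhds (0 + w0)) :=
    (tendsto_const_div_atTop_nhds_zero_nat w21).add tendsto_const_nhds
  rw [zero_add] at hlim
  refine hlim.congr' ?_
  -- At `r = 0` the quotient has a junk value, so the formula only holds eventually.
  filter_upwards [eventually_ne_atTop 0] with r hr
  have hr' : (r : ℝ) ≠ 0 := by exact_mod_cast hr
  rw [hform]
  field_simp
end

section
/- Let s > 0 be a real number, and let (f_n)_{n≥1} be a nondecreasing positive sequence with f_n/log n → s as n → ∞. Let ε ∈ (0,1) and let (h_n)_{n≥1} be a positive sequence satisfying |h_n/f_n − 1| < ε for all n. Let σ : ℕ → ℕ be a permutation of the positive integers such that the sequence g_n = h_{σ(n)} is nondecreasing. Then limsup_{n→∞} |g_n/log n − s| ≤ s·ε. -/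
/-!
Sorting preserves the termwise bounds `(1 - ε) f ≤ h ≤ (1 + ε) f`, because `f` is already sorted.
Indeed, by the pigeonhole principle (`exists_le_le_apply`) some `j ≤ n` has `σ j ≥ n`, so
`g n ≥ g j = h (σ j) ≥ (1 - ε) f (σ j) ≥ (1 - ε) f n`; the same principle for `σ⁻¹` gives
`g n ≤ (1 + ε) f n`. Hence `|g n - f n| ≤ ε f n`, and after division by `log n`
the triangle inequality bounds `|g n / log n - s|` by `|f n / log n - s| + ε (f n / log n)`,
which tends to `s ε`.
-/

open Filter Topology

/-- Pigeonhole: an injective map cannot send the `n + 1` numbers `0, …, n` below `n`. -/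
lemma exists_le_le_apply {φ : ℕ → ℕ} (hφ : Function.Injective φ) (n : ℕ) :
    ∃ i ≤ n, n ≤ φ i := by
  by_contra! hlt
  have hcard := Finset.card_le_card_of_injOn (s := Finset.range (n + 1)) (t := Finset.range n) φ
    (fun i hi => by
      have := hlt i (by simp at hi; omega)
      simpa using this)
    hφ.injOn
  simp at hcard

/-- let `s > 0`, let `(f_n)` be a nondecreasing positive sequence
with `f_n/log n → s`, let `ε ∈ (0,1)` and `(h_n)` a positive sequence with
`|h_n/f_n − 1| < ε` for all `n`, and let `σ` be a permutation of the indices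
such that `g_n = h_{σ(n)}` is nondecreasing.  Then
`limsup_n |g_n/log n − s| ≤ s·ε`. -/
theorem stmt12 (s : ℝ) (hs : 0 < s)
    (f : ℕ → ℝ) (hfpos : ∀ n, 0 < f n) (hfmono : Monotone f)
    (hflim : Tendsto (fun n : ℕ => f n / Real.log n) atTop (nhds s))
    (ε : ℝ) (hε : ε ∈ Set.Ioo (0 : ℝ) 1)
    (h : ℕ → ℝ) (hhpos : ∀ n, 0 < h n)
    (hh : ∀ n, |h n / f n - 1| < ε)
    (σ : ℕ → ℕ) (hσ : Function.Bijective σ)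
    (g : ℕ → ℝ) (hg : ∀ n, g n = h (σ n)) (hgmono : Monotone g) :
    limsup (fun n : ℕ => |g n / Real.log n - s|) atTop ≤ s * ε := by
  obtain ⟨hε0, hε1⟩ := hε
  have hlow (n : ℕ) : (1 - ε) * f n ≤ h n := by
    have h1 : 1 - ε < h n / f n := by linarith [(abs_lt.mp (hh n)).1]
    exact ((lt_div_iff₀ (hfpos n)).mp h1).le
  have hupp (n : ℕ) : h n ≤ (1 + ε) * f n := by
    have h1 : h n / f n < 1 + ε := by linarith [(abs_lt.mp (hh n)).2]
    exact ((div_lt_iff₀ (hfpos n)).mp h1).le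
  have hglow (n : ℕ) : (1 - ε) * f n ≤ g n := by
    obtain ⟨j, hj, hnj⟩ := exists_le_le_apply hσ.injective n
    calc (1 - ε) * f n ≤ (1 - ε) * f (σ j) :=
          mul_le_mul_of_nonneg_left (hfmono hnj) (by linarith)
      _ ≤ h (σ j) := hlow _
      _ = g j := (hg j).symm
      _ ≤ g n := hgmono hj
  have hgupp (n : ℕ) : g n ≤ (1 + ε) * f n := by
    let τ := Equiv.ofBijective σ hσ
    obtain ⟨i, hi, hni⟩ := exists_le_le_apply τ.symm.injective n
    calc g n ≤ g (τ.symm i) := hgmono hni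
      _ = h i := by rw [hg]; exact congrArg h (τ.apply_symm_apply i)
      _ ≤ (1 + ε) * f i := hupp i
      _ ≤ (1 + ε) * f n := mul_le_mul_of_nonneg_left (hfmono hi) (by linarith)
  have hbound (n : ℕ) :
      |g n / Real.log n - s| ≤ |f n / Real.log n - s| + ε * (f n / Real.log n) := by
    -- At `n = 0, 1` the logarithm vanishes and both quotients are `0`, so no case split is needed.
    have hlog : 0 ≤ Real.log n := Real.log_natCast_nonneg n
    have hgf : |g n / Real.log n - f n / Real.log n| ≤ ε * (f n / Real.log n) := by
      rw [← sub_div, abs_div, abs_of_nonneg hlog, ← mul_div_assoc]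
      refine div_le_div_of_nonneg_right ?_ hlog
      rw [abs_le]
      constructor <;> linarith [hglow n, hgupp n]
    linarith [abs_sub_le (g n / Real.log n) (f n / Real.log n) s]
  have hlim : Tendsto (fun n : ℕ => |f n / Real.log n - s| + ε * (f n / Real.log n))
      atTop (𝓝 (s * ε)) := by
    have := (hflim.sub_const s).abs.add (hflim.const_mul ε)
    simpa [mul_comm] using this
  calc limsup (fun n : ℕ => |g n / Real.log n - s|) atTop
      ≤ limsup (fun n : ℕ => |f n / Real.log n - s| + ε * (f n / Real.log n)) atTop :=
        limsup_le_limsup (Eventually.of_forall hbound)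
          (IsBoundedUnder.isCoboundedUnder_le
            (isBoundedUnder_of ⟨0, fun n => abs_nonneg _⟩))
          hlim.isBoundedUnder_le
    _ = s * ε := hlim.limsup_eq
end

section
/- For i = 1,…,k let (p_r^{(i)})_{r≥1} be a nondecreasing positive sequence such that s_i = lim_{r→∞} p_r^{(i)}/r exists and is a positive real number, and let (c_r) be the composition of the sequences (p_r^{(1)}),…,(p_r^{(k)}). Then lim_{r→∞} c_r^k / r = k!·∏_{i=1}^k s_i. -/
open Filter Topology

/-!
For fixed `ε ∈ (0, 1)`, each `p i j` lies within a bounded distance of the interval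
`[(1 - ε) s_i j, (1 + ε) s_i j]` (`linear_bounds`).  The number of tuples with sum at most `x` is
therefore controlled by the number of lattice points of simplices `∑ t_i j_i ≤ y` with
`t_i = (1 ± ε) s_i` and `y = x ± O(1)`.  That number lies between `y ^ k / (k! ∏ t_i)` and
`(y + ∑ t_i) ^ k / (k! ∏ t_i)` (`exists_simplex_finset`, by induction on `k`, slicing along the
first coordinate and comparing the resulting sum of `k`-th powers with a telescoping one).

Since `c` is a monotone enumeration, at least `r + 1` tuples have sum at most `c r` and at most `r`
tuples have sum below `c r`.  With `b r = (k! ∏ s_i · r) ^ (1 / k)`, taking `k`-th roots gives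
`(1 - ε) b r ≤ c r + O(1)` and `c r ≤ (1 + ε) b r + O(1)`, hence `c r / b r → 1`
(`tendsto_div_one`), and raising to the power `k` concludes.
-/

lemma pow_succ_sub_le (n : ℕ) (z w : ℝ) (hw : 0 ≤ w) (hwz : w ≤ z) :
    z ^ (n + 1) - w ^ (n + 1) ≤ (n + 1) * (z - w) * z ^ n := by
  induction n with
  | zero => simp
  | succ n ih =>
    have h1 : w ^ (n + 1) ≤ z ^ (n + 1) := pow_le_pow_left₀ hw hwz _
    have h2 := mul_le_mul_of_nonneg_left ih (hw.trans hwz)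
    have h3 := mul_le_mul_of_nonneg_left h1 (sub_nonneg.2 hwz)
    push_cast
    calc z ^ (n + 1 + 1) - w ^ (n + 1 + 1)
        = z * (z ^ (n + 1) - w ^ (n + 1)) + (z - w) * w ^ (n + 1) := by ring
      _ ≤ z * ((n + 1) * (z - w) * z ^ n) + (z - w) * z ^ (n + 1) := add_le_add h2 h3
      _ = _ := by ring

lemma le_pow_succ_sub (n : ℕ) (z w : ℝ) (hw : 0 ≤ w) (hwz : w ≤ z) :
    (n + 1) * (z - w) * w ^ n ≤ z ^ (n + 1) - w ^ (n + 1) := by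
  induction n with
  | zero => simp
  | succ n ih =>
    have h1 : w ^ (n + 1) ≤ z ^ (n + 1) := pow_le_pow_left₀ hw hwz _
    have h2 := mul_le_mul_of_nonneg_left ih hw
    have h3 := mul_le_mul_of_nonneg_left h1 (sub_nonneg.2 hwz)
    push_cast
    calc ((n : ℝ) + 1 + 1) * (z - w) * w ^ (n + 1)
        = w * ((n + 1) * (z - w) * w ^ n) + (z - w) * w ^ (n + 1) := by ring
      _ ≤ w * (z ^ (n + 1) - w ^ (n + 1)) + (z - w) * z ^ (n + 1) := add_le_add h2 h3
      _ = _ := by ring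

lemma sum_pow_upper (k M : ℕ) (s y S : ℝ) (hs : 0 < s) (hM : s * M ≤ y) (hS : 0 ≤ S) :
    ∑ j ∈ Finset.range (M + 1), (k + 1) * s * (y - s * j + S) ^ k ≤ (y + (s + S)) ^ (k + 1) := by
  have hterm : ∀ j ∈ Finset.range (M + 1), (k + 1) * s * (y - s * j + S) ^ k ≤
      (y - s * j + S + s) ^ (k + 1) - (y - s * (j + 1 : ℕ) + S + s) ^ (k + 1) := by
    intro j hj
    have hj' : (j : ℝ) ≤ M := by exact_mod_cast Nat.lt_succ_iff.1 (Finset.mem_range.1 hj)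
    have h0 : 0 ≤ y - s * j + S := by nlinarith
    have h := le_pow_succ_sub k (y - s * j + S + s) (y - s * j + S) h0 (by linarith)
    push_cast
    convert h using 2 <;> ring
  refine (Finset.sum_le_sum hterm).trans ?_
  rw [Finset.sum_range_sub' (fun j : ℕ => (y - s * j + S + s) ^ (k + 1))]
  have : 0 ≤ (y - s * (M + 1 : ℕ) + S + s) ^ (k + 1) := by
    apply pow_nonneg
    push_cast
    nlinarith
  have e : y - s * (0 : ℕ) + S + s = y + (s + S) := by push_cast; ring
  simp only [e]
  linarith

lemma sum_pow_lower (k M : ℕ) (s y : ℝ) (hs : 0 < s) (hM : s * M ≤ y) (hM' : y ≤ s * (M + 1)) :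
    y ^ (k + 1) ≤ ∑ j ∈ Finset.range (M + 1), (k + 1) * s * (y - s * j) ^ k := by
  have hterm : ∀ j ∈ Finset.range (M + 1),
      (max (y - s * j) 0) ^ (k + 1) - (max (y - s * (j + 1 : ℕ)) 0) ^ (k + 1) ≤
      (k + 1) * s * (y - s * j) ^ k := by
    intro j hj
    have hj' : (j : ℝ) ≤ M := by exact_mod_cast Nat.lt_succ_iff.1 (Finset.mem_range.1 hj)
    have h0 : 0 ≤ y - s * j := by nlinarith
    rw [max_eq_left h0]
    set w := max (y - s * (j + 1 : ℕ)) 0 with hw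
    have hw1 : y - s * (j + 1 : ℕ) ≤ w := le_max_left _ _
    have hw2 : w ≤ y - s * j := max_le (by push_cast; linarith) h0
    refine (pow_succ_sub_le k _ w (le_max_right _ _) hw2).trans ?_
    push_cast at hw1
    have : y - s * j - w ≤ s := by linarith
    gcongr
  refine le_trans ?_ (Finset.sum_le_sum hterm)
  rw [Finset.sum_range_sub' (fun j : ℕ => (max (y - s * j) 0) ^ (k + 1))]
  have h0 : 0 ≤ y := le_trans (by positivity) hM
  have e : max (y - s * (M + 1 : ℕ)) 0 = 0 := max_eq_right (by push_cast; linarith)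
  simp only [e]
  simp [h0]

/-- The lattice points `j ∈ ℕ^k` of the simplex `∑ s_i j_i ≤ y` form a finite set, whose cardinality
is at least the volume of that simplex and at most the volume of the enlarged simplex
`∑ s_i x_i ≤ y + ∑ s_i`. -/
lemma exists_simplex_finset (k : ℕ) : ∀ (s : Fin k → ℝ), (∀ i, 0 < s i) → ∀ y : ℝ, 0 ≤ y →
    ∃ F : Finset (Fin k → ℕ), (∀ j, j ∈ F ↔ ∑ i, s i * (j i : ℝ) ≤ y) ∧
      y ^ k ≤ (k.factorial : ℝ) * (∏ i, s i) * (F.card : ℝ) ∧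
      (k.factorial : ℝ) * (∏ i, s i) * (F.card : ℝ) ≤ (y + ∑ i, s i) ^ k := by
  induction k with
  | zero =>
    intro s _ y hy
    exact ⟨Finset.univ, fun j => by simp [hy, -Finset.univ_unique], by simp, by simp⟩
  | succ k ih =>
    intro s hs y hy
    set t : Fin k → ℝ := fun i => s i.succ with ht
    have htp : ∀ i, 0 < t i := fun i => hs _
    have h0 := hs 0
    obtain ⟨M, hM⟩ : ∃ M : ℕ, M = ⌊y / s 0⌋₊ := ⟨_, rfl⟩
    have hM1 : s 0 * M ≤ y := by
      have := Nat.floor_le (div_nonneg hy h0.le)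
      rw [← hM, le_div_iff₀ h0] at this
      linarith
    have hM2 : y < s 0 * (M + 1) := by
      have := Nat.lt_floor_add_one (y / s 0)
      rw [← hM, div_lt_iff₀ h0] at this
      linarith
    have hnn : ∀ j : ℕ, j ≤ M → 0 ≤ y - s 0 * j := by
      intro j hj
      have : (j : ℝ) ≤ M := by exact_mod_cast hj
      nlinarith
    -- The slice of the simplex at first coordinate `j`; the value for `j > M` is irrelevant.
    have hex : ∀ j : ℕ, ∃ F : Finset (Fin k → ℕ), j ≤ M →
        ((∀ v, v ∈ F ↔ ∑ i, t i * (v i : ℝ) ≤ y - s 0 * j) ∧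
        (y - s 0 * j) ^ k ≤ (k.factorial : ℝ) * (∏ i, t i) * (F.card : ℝ) ∧
        (k.factorial : ℝ) * (∏ i, t i) * (F.card : ℝ) ≤ (y - s 0 * j + ∑ i, t i) ^ k) := by
      intro j
      by_cases hj : j ≤ M
      · obtain ⟨F, hF⟩ := ih t htp _ (hnn j hj)
        exact ⟨F, fun _ => hF⟩
      · exact ⟨∅, fun h => absurd h hj⟩
    choose F hF using hex
    let e : (Σ _ : ℕ, (Fin k → ℕ)) ↪ (Fin (k + 1) → ℕ) :=
      ⟨fun x => Fin.cons x.1 x.2, by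
        rintro ⟨a, v⟩ ⟨b, w⟩ h
        obtain ⟨h1, h2⟩ := Fin.cons_injective2 h
        subst h1 h2
        rfl⟩
    have hcard : ((((Finset.range (M + 1)).sigma F).map e).card : ℝ) =
        ∑ j ∈ Finset.range (M + 1), ((F j).card : ℝ) := by
      rw [Finset.card_map, Finset.card_sigma]
      push_cast
      rfl
    have hfac : ((k + 1).factorial : ℝ) * (∏ i, s i) * ∑ j ∈ Finset.range (M + 1), ((F j).card : ℝ)
        = ∑ j ∈ Finset.range (M + 1),
          (k + 1) * s 0 * ((k.factorial : ℝ) * (∏ i, t i) * ((F j).card : ℝ)) := by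
      rw [Fin.prod_univ_succ, Nat.factorial_succ, Finset.mul_sum]
      refine Finset.sum_congr rfl fun j _ => ?_
      push_cast
      ring
    refine ⟨((Finset.range (M + 1)).sigma F).map e, ?_, ?_, ?_⟩
    · intro j
      rw [Fin.sum_univ_succ]
      have htail : 0 ≤ ∑ i : Fin k, s i.succ * (j i.succ : ℝ) :=
        Finset.sum_nonneg fun i _ => mul_nonneg (hs _).le (Nat.cast_nonneg _)
      constructor
      · intro hj
        obtain ⟨⟨a, v⟩, hav, rfl⟩ := Finset.mem_map.1 hj
        obtain ⟨ha, hv⟩ := Finset.mem_sigma.1 hav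
        have := ((hF a (Nat.lt_succ_iff.1 (Finset.mem_range.1 ha))).1 v).1 hv
        change s 0 * (a : ℝ) + ∑ i, t i * (v i : ℝ) ≤ y
        linarith
      · intro hj
        have hj0 : j 0 ≤ M := by
          by_contra! hlt
          have : (M : ℝ) + 1 ≤ j 0 := by exact_mod_cast hlt
          nlinarith
        refine Finset.mem_map.2 ⟨⟨j 0, Fin.tail j⟩, Finset.mem_sigma.2
          ⟨Finset.mem_range.2 (Nat.lt_succ_iff.2 hj0), ?_⟩, Fin.cons_self_tail j⟩
        refine ((hF _ hj0).1 _).2 ?_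
        simp only [Fin.tail, ht]
        linarith
    · rw [hcard, hfac]
      refine (sum_pow_lower k M (s 0) y h0 hM1 hM2.le).trans (Finset.sum_le_sum fun j hj => ?_)
      exact mul_le_mul_of_nonneg_left (hF j (Nat.lt_succ_iff.1 (Finset.mem_range.1 hj))).2.1
        (by positivity)
    · rw [hcard, hfac, Fin.sum_univ_succ]
      refine le_trans (Finset.sum_le_sum fun j hj => ?_)
        (sum_pow_upper k M (s 0) y (∑ i, t i) h0 hM1 (Finset.sum_nonneg fun i _ => (htp i).le))
      exact mul_le_mul_of_nonneg_left (hF j (Nat.lt_succ_iff.1 (Finset.mem_range.1 hj))).2.2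
        (by positivity)

lemma linear_bounds (p : ℕ → ℝ) (hpos : ∀ n, 0 < p n) (hmono : Monotone p) (s : ℝ) (hs : 0 < s)
    (hlim : Tendsto (fun r : ℕ => p r / (r : ℝ)) atTop (𝓝 s)) (ε : ℝ) (h0 : 0 < ε) :
    ∃ C : ℝ, 0 ≤ C ∧ ∀ j : ℕ, (1 - ε) * s * j ≤ p j + C ∧ p j ≤ (1 + ε) * s * j + C := by
  have hev := (Metric.tendsto_nhds.1 hlim (ε * s) (by positivity)).and (eventually_gt_atTop 0)
  obtain ⟨N, hN⟩ := eventually_atTop.1 hev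
  have hpN := hpos N
  refine ⟨p N + s * N, by positivity, fun j => ?_⟩
  have hsN : 0 ≤ s * N := by positivity
  have hj0 : (0 : ℝ) ≤ j := Nat.cast_nonneg j
  rcases le_total N j with hj | hj
  · obtain ⟨hd, hjp⟩ := hN j hj
    have hjp' : (0 : ℝ) < j := by exact_mod_cast hjp
    rw [Real.dist_eq, abs_lt] at hd
    obtain ⟨ha, hb⟩ := hd
    have ha' : (1 - ε) * s < p j / j := by linarith
    have hb' : p j / j < (1 + ε) * s := by linarith
    rw [lt_div_iff₀ hjp'] at ha'
    rw [div_lt_iff₀ hjp'] at hb'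
    constructor <;> linarith
  · have hp := hmono hj
    have hpj := hpos j
    have hjN : s * (j : ℝ) ≤ s * N := mul_le_mul_of_nonneg_left (by exact_mod_cast hj) hs.le
    have h2 : 0 ≤ s * (j : ℝ) := by positivity
    constructor
    · nlinarith
    · have : 0 ≤ (1 + ε) * s * j := by positivity
      linarith

lemma tendsto_div_one (a b : ℕ → ℝ) (hb : Tendsto b atTop atTop)
    (h : ∀ ε : ℝ, 0 < ε → ε < 1 → ∃ C : ℝ, ∀ r,
      (1 - ε) * b r ≤ a r + C ∧ a r ≤ (1 + ε) * b r + C) :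
    Tendsto (fun r => a r / b r) atTop (𝓝 1) := by
  rw [Metric.tendsto_nhds]
  intro δ hδ
  obtain ⟨ε, hε0, hε⟩ := exists_between (lt_min hδ one_pos)
  obtain ⟨C, hC⟩ := h ε hε0 (hε.trans_le (min_le_right _ _))
  have hεδ : 0 < δ - ε := sub_pos.2 (hε.trans_le (min_le_left _ _))
  filter_upwards [hb.eventually_gt_atTop (C / (δ - ε)), hb.eventually_gt_atTop 0] with r hr hr0
  obtain ⟨h1, h2⟩ := hC r
  rw [div_lt_iff₀ hεδ] at hr
  rw [Real.dist_eq, abs_lt]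
  constructor
  · rw [lt_sub_iff_add_lt, lt_div_iff₀ hr0]
    linarith
  · rw [sub_lt_iff_lt_add, div_lt_iff₀ hr0]
    linarith

/-- for `i = 1,…,k` let `(p_r^{(i)})` be nondecreasing positive
sequences with `p_r^{(i)}/r → s_i ∈ (0,∞)`, and let `(c_r)` be their
composition: a nondecreasing enumeration (via a bijection `σ : ℕ → ℕ^k`) of all
sums `Σ_i p^{(i)}_{j_i}`.  Then `lim_{r→∞} c_r^k / r = k!·∏_i s_i`. -/
theorem stmt13 (k : ℕ) (hk : 1 ≤ k)
    (p : Fin k → ℕ → ℝ)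
    (hpos : ∀ i n, 0 < p i n) (hmono : ∀ i, Monotone (p i))
    (s : Fin k → ℝ) (hs : ∀ i, 0 < s i)
    (hlim : ∀ i, Tendsto (fun r : ℕ => p i r / (r : ℝ)) atTop (nhds (s i)))
    (c : ℕ → ℝ) (σ : ℕ → (Fin k → ℕ)) (hσ : Function.Bijective σ)
    (hc : ∀ r, c r = ∑ i, p i (σ r i)) (hcm : Monotone c) :
    Tendsto (fun r : ℕ => c r ^ k / (r : ℝ)) atTop
      (nhds ((Nat.factorial k : ℝ) * ∏ i, s i)) := by
  have hk0 : k ≠ 0 := by omega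
  set G : ℝ := (Nat.factorial k : ℝ) * ∏ i, s i with hG
  have hGpos : 0 < G := by
    have := Finset.prod_pos fun i (_ : i ∈ Finset.univ) => hs i
    positivity
  set b : ℕ → ℝ := fun r => (G * r) ^ ((k : ℝ)⁻¹) with hbdef
  have hbk : ∀ r, b r ^ k = G * r := fun r => Real.rpow_inv_natCast_pow (by positivity) hk0
  have hb0 : ∀ r, 0 ≤ b r := fun r => by positivity
  have hb : Tendsto b atTop atTop :=
    (tendsto_rpow_atTop (by positivity)).comp
      (tendsto_natCast_atTop_atTop.const_mul_atTop hGpos)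
  have hcpos : ∀ r, 0 ≤ c r := fun r => by
    rw [hc]
    exact Finset.sum_nonneg fun i _ => (hpos _ _).le
  have key : Tendsto (fun r => c r / b r) atTop (𝓝 1) := by
    refine tendsto_div_one c b hb fun ε h0 h1 => ?_
    choose C hC0 hC using fun i =>
      linear_bounds (p i) (hpos i) (hmono i) (s i) (hs i) (hlim i) ε h0
    have hCs : 0 ≤ ∑ i, C i := Finset.sum_nonneg fun i _ => hC0 i
    have hSs : 0 ≤ ∑ i, (1 - ε) * s i :=
      Finset.sum_nonneg fun i _ => mul_nonneg (by linarith) (hs i).le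
    have hprod : ∀ a : ℝ, (k.factorial : ℝ) * (∏ i, a * s i) = a ^ k * G := by
      intro a
      rw [Finset.prod_mul_distrib, hG]
      simp
      ring
    refine ⟨∑ i, C i + ∑ i, (1 - ε) * s i + 1, fun r => ⟨?_, ?_⟩⟩
    · obtain ⟨F, hF, -, hF2⟩ := exists_simplex_finset k (fun i => (1 - ε) * s i)
        (fun i => mul_pos (by linarith) (hs i)) (c r + ∑ i, C i) (add_nonneg (hcpos r) hCs)
      -- The first `r + 1` tuples of the enumeration all lie in the simplex.
      have hsub : (Finset.range (r + 1)).map ⟨σ, hσ.1⟩ ⊆ F := by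
        intro j hj
        obtain ⟨q, hq, rfl⟩ := Finset.mem_map.1 hj
        refine (hF _).2 ?_
        refine le_trans ?_ (add_le_add_left
          (hcm (Nat.lt_succ_iff.1 (Finset.mem_range.1 hq))) _)
        rw [hc, ← Finset.sum_add_distrib]
        exact Finset.sum_le_sum fun i _ => (hC i _).1
      have hcard := Finset.card_le_card hsub
      rw [Finset.card_map, Finset.card_range] at hcard
      have hcard' : (r : ℝ) ≤ F.card := by exact_mod_cast (Nat.le_succ r).trans hcard
      rw [hprod] at hF2
      have hpow : ((1 - ε) * b r) ^ k ≤ (c r + ∑ i, C i + ∑ i, (1 - ε) * s i) ^ k := by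
        rw [mul_pow, hbk]
        refine le_trans ?_ hF2
        have : 0 ≤ (1 - ε) ^ k * G := mul_nonneg (pow_nonneg (by linarith) _) hGpos.le
        nlinarith
      have := le_of_pow_le_pow_left₀ hk0
        (add_nonneg (add_nonneg (hcpos r) hCs) hSs) hpow
      linarith
    · rcases lt_or_ge (c r - ∑ i, C i - 1) 0 with hneg | hnn
      · have : 0 ≤ (1 + ε) * b r := mul_nonneg (by linarith) (hb0 r)
        linarith
      obtain ⟨F, hF, hF1, -⟩ := exists_simplex_finset k (fun i => (1 + ε) * s i)
        (fun i => mul_pos (by linarith) (hs i)) _ hnn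
      -- Every tuple of this simplex has sum below `c r`, hence occurs before index `r`.
      have hsub : F ⊆ (Finset.range r).map ⟨σ, hσ.1⟩ := by
        intro j hj
        obtain ⟨q, rfl⟩ := hσ.2 j
        refine Finset.mem_map.2 ⟨q, Finset.mem_range.2 ?_, rfl⟩
        by_contra! hrq
        have h2 := (hF _).1 hj
        have h3 : c q ≤ ∑ i, (1 + ε) * s i * (σ q i : ℝ) + ∑ i, C i := by
          rw [hc, ← Finset.sum_add_distrib]
          exact Finset.sum_le_sum fun i _ => (hC i _).2
        have := hcm hrq
        linarith
      have hcard := Finset.card_le_card hsub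
      rw [Finset.card_map, Finset.card_range] at hcard
      have hcard' : (F.card : ℝ) ≤ r := by exact_mod_cast hcard
      rw [hprod] at hF1
      have hpow : (c r - ∑ i, C i - 1) ^ k ≤ ((1 + ε) * b r) ^ k := by
        rw [mul_pow, hbk]
        refine hF1.trans ?_
        rw [← mul_assoc _ G]
        exact mul_le_mul_of_nonneg_left hcard' (by positivity)
      have := le_of_pow_le_pow_left₀ hk0 (mul_nonneg (by linarith) (hb0 r)) hpow
      linarith
  have h2 := (key.pow k).const_mul G
  rw [one_pow, mul_one] at h2
  refine h2.congr fun r => ?_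
  rw [div_pow, hbk, ← mul_div_assoc, mul_div_mul_left _ _ hGpos.ne']
end

section
/- For i = 1,…,k let (p_r^{(i)})_{r≥1} be a nondecreasing positive sequence such that s_i = lim_{r→∞} p_r^{(i)}/log r exists in (0,∞] for every i, with s_i < ∞ for at least one i, and let (c_r) be the composition of the sequences (p_r^{(1)}),…,(p_r^{(k)}). Then lim_{r→∞} c_r / log r = min_{1≤i≤k} s_i. -/
open Filter Topology

/-!
Let `S = min s_i`, a positive real number attained at some index `i₀`.

*Upper bound.* The `r + 1` tuples that vanish off coordinate `i₀` and have `i₀`-th coordinate at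
most `r` cannot all occur among the first `r` terms of the composition, so
`c r ≤ p i₀ r + C` with a constant `C` (`composition_le`), and the right side is asymptotic to
`S log r`.

*Lower bound.* For `0 < a < S` each series `∑ₙ exp (-p i n / a)` converges, by comparison with
`∑ n ^ (-b / a)` where `a < b < S` (`summable_exp_neg_div`). Multiplying these series out bounds
`∑ᵣ exp (-c r / a)` by a finite `M`. As `c` is monotone, `(r + 1) exp (-c r / a) ≤ M`, that is
`c r ≥ a log (r + 1) - a log M` (`exists_card_mul_exp_le`).
-/

/-- Pigeonhole on the tuples supported on coordinate `i₀`. The constant is the value at the zero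
tuple; its `i₀`-th summand is superfluous, but keeping it makes the bound simpler. -/
lemma composition_le {k : ℕ} {p : Fin k → ℕ → ℝ} (hpos : ∀ i n, 0 < p i n)
    (hmono : ∀ i, Monotone (p i)) {c : ℕ → ℝ} {σ : ℕ → (Fin k → ℕ)}
    (hσ : Function.Bijective σ) (hc : ∀ r, c r = ∑ i, p i (σ r i)) (hcm : Monotone c)
    (i₀ : Fin k) (r : ℕ) : c r ≤ p i₀ r + ∑ i, p i 0 := by
  classical
  choose g hg using fun n : ℕ => hσ.surjective (Pi.single i₀ n)
  have hginj : Function.Injective g := fun m n h =>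
    Pi.single_injective i₀ ((hg m).symm.trans ((congrArg σ h).trans (hg n)))
  obtain ⟨n, hn, hrn⟩ : ∃ n ∈ Finset.range (r + 1), r ≤ g n := by
    by_contra! h
    have := Finset.card_le_card_of_injOn (t := Finset.range r) g
      (fun n hn => by simpa using h n hn) hginj.injOn
    simp at this
  have hnr : n ≤ r := by simpa [Nat.lt_succ_iff] using hn
  calc c r ≤ c (g n) := hcm hrn
    _ = ∑ i, p i ((Pi.single i₀ n : Fin k → ℕ) i) := by rw [hc, hg]
    _ ≤ ∑ i, ((if i = i₀ then p i₀ r else 0) + p i 0) := by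
        refine Finset.sum_le_sum fun i _ => ?_
        by_cases h : i = i₀
        · subst h
          have := hmono i hnr
          have := hpos i 0
          simp
          linarith
        · simp [h]
    _ = p i₀ r + ∑ i, p i 0 := by simp [Finset.sum_add_distrib]

lemma summable_exp_neg_div {q : ℕ → ℝ} {a b : ℝ} (ha : 0 < a) (hab : a < b)
    (hq : ∀ᶠ n : ℕ in atTop, b < q n / Real.log n) :
    Summable fun n => Real.exp (-q n / a) := by
  have hsum : Summable fun n : ℕ => (n : ℝ) ^ (-(b / a)) := by
    rw [Real.summable_nat_rpow, neg_lt_neg_iff, one_lt_div ha]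
    exact hab
  refine Summable.of_norm_bounded_eventually_nat hsum ?_
  filter_upwards [hq, eventually_ge_atTop 2] with n hn hn2
  have hn1 : (1 : ℝ) < n := by exact_mod_cast hn2
  have hlog : 0 < Real.log n := Real.log_pos hn1
  rw [lt_div_iff₀ hlog] at hn
  rw [Real.norm_eq_abs, Real.abs_exp, Real.rpow_def_of_pos (by linarith), Real.exp_le_exp,
    show Real.log n * -(b / a) = -(b * Real.log n) / a by ring]
  gcongr

/-- A Chernoff-type counting bound: the sum of `exp (-c r / a)` over all terms of the composition
is at most the product of the corresponding sums over the factors. -/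
lemma exists_card_mul_exp_le {k : ℕ} {p : Fin k → ℕ → ℝ} {c : ℕ → ℝ} {σ : ℕ → (Fin k → ℕ)}
    (hσ : Function.Injective σ) (hc : ∀ r, c r = ∑ i, p i (σ r i)) (hcm : Monotone c)
    {a : ℝ} (ha : 0 < a) (hsum : ∀ i, Summable fun n => Real.exp (-p i n / a)) :
    ∃ M : ℝ, ∀ r : ℕ, ((r + 1 : ℕ) : ℝ) * Real.exp (-c r / a) ≤ M := by
  classical
  refine ⟨∏ i, ∑' n, Real.exp (-p i n / a), fun r => ?_⟩
  have hexp : ∀ m, Real.exp (-c m / a) = ∏ i, Real.exp (-p i (σ m i) / a) := by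
    intro m
    rw [← Real.exp_sum, hc, ← Finset.sum_div, Finset.sum_neg_distrib]
  -- a finite box in each coordinate containing the first `r + 1` tuples
  let t : Fin k → Finset ℕ := fun i => (Finset.range (r + 1)).image fun m => σ m i
  calc ((r + 1 : ℕ) : ℝ) * Real.exp (-c r / a)
      = ∑ _m ∈ Finset.range (r + 1), Real.exp (-c r / a) := by simp
    _ ≤ ∑ m ∈ Finset.range (r + 1), Real.exp (-c m / a) := by
        refine Finset.sum_le_sum fun m hm => ?_
        have : c m ≤ c r := hcm (by simpa [Nat.lt_succ_iff] using hm)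
        gcongr
    _ = ∑ x ∈ (Finset.range (r + 1)).image σ, ∏ i, Real.exp (-p i (x i) / a) := by
        rw [Finset.sum_image hσ.injOn]
        exact Finset.sum_congr rfl fun m _ => hexp m
    _ ≤ ∑ x ∈ Fintype.piFinset t, ∏ i, Real.exp (-p i (x i) / a) := by
        refine Finset.sum_le_sum_of_subset_of_nonneg ?_ fun x _ _ => by positivity
        intro x hx
        obtain ⟨m, hm, rfl⟩ := Finset.mem_image.1 hx
        exact Fintype.mem_piFinset.2 fun i => Finset.mem_image_of_mem _ hm
    _ = ∏ i, ∑ n ∈ t i, Real.exp (-p i n / a) :=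
        (Finset.prod_univ_sum t fun i n => Real.exp (-p i n / a)).symm
    _ ≤ ∏ i, ∑' n, Real.exp (-p i n / a) :=
        Finset.prod_le_prod (fun i _ => by positivity) fun i _ =>
          (hsum i).sum_le_tsum _ fun n _ => by positivity

/-- for `i = 1,…,k` let `(p_r^{(i)})` be nondecreasing positive
sequences such that `s_i = lim p_r^{(i)}/log r` exists in `(0,∞]` (as an
extended real) for every `i` and is finite for at least one `i`, and let
`(c_r)` be their composition.  Then `lim_{r→∞} c_r/log r = min_i s_i`. -/
theorem stmt14 (k : ℕ) (hk : 1 ≤ k)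
    (p : Fin k → ℕ → ℝ)
    (hpos : ∀ i n, 0 < p i n) (hmono : ∀ i, Monotone (p i))
    (s : Fin k → EReal) (hs : ∀ i, 0 < s i) (hsfin : ∃ i, s i ≠ ⊤)
    (hlim : ∀ i, Tendsto (fun r : ℕ => ((p i r / Real.log r : ℝ) : EReal))
      atTop (nhds (s i)))
    (c : ℕ → ℝ) (σ : ℕ → (Fin k → ℕ)) (hσ : Function.Bijective σ)
    (hc : ∀ r, c r = ∑ i, p i (σ r i)) (hcm : Monotone c) :
    Tendsto (fun r : ℕ => ((c r / Real.log r : ℝ) : EReal)) atTop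
      (nhds (⨅ i, s i)) := by
  have : Nonempty (Fin k) := ⟨⟨0, hk⟩⟩
  obtain ⟨i₀, hi₀⟩ := exists_eq_ciInf_of_finite (f := s)
  have hle : ∀ i, s i₀ ≤ s i := fun i => hi₀ ▸ iInf_le s i
  obtain ⟨S, hS⟩ : ∃ S : ℝ, (S : EReal) = s i₀ := by
    obtain ⟨j, hj⟩ := hsfin
    exact ⟨_, EReal.coe_toReal (ne_top_of_le_ne_top hj (hle j)) (ne_bot_of_gt (hs i₀))⟩
  have hS0 : 0 < S := by
    have := hs i₀
    rw [← hS] at this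
    exact_mod_cast this
  have hp₀ := hlim i₀
  rw [← hS, EReal.tendsto_coe] at hp₀
  rw [← hi₀, ← hS, EReal.tendsto_coe]
  have hlog : Tendsto (fun r : ℕ => Real.log r) atTop atTop :=
    Real.tendsto_log_atTop.comp tendsto_natCast_atTop_atTop
  refine tendsto_order.2 ⟨fun l hl₀ => ?_, fun u hu₀ => ?_⟩
  · obtain ⟨a, ha, haS⟩ := exists_between (max_lt hl₀ hS0)
    obtain ⟨b, hab, hbS⟩ := exists_between haS
    obtain ⟨hla, ha0⟩ := max_lt_iff.1 ha
    obtain ⟨M, hM⟩ := exists_card_mul_exp_le hσ.injective hc hcm ha0 fun i =>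
      summable_exp_neg_div ha0 hab <| by
        have hb : (b : EReal) < s i :=
          lt_of_lt_of_le (by rw [← hS]; exact_mod_cast hbS) (hle i)
        filter_upwards [(hlim i).eventually (lt_mem_nhds hb)] with n hn
        exact_mod_cast hn
    have hlow : Tendsto (fun r : ℕ => a - a * Real.log M / Real.log r) atTop (𝓝 a) := by
      simpa using tendsto_const_nhds.sub (hlog.const_div_atTop (a * Real.log M))
    filter_upwards [hlow.eventually (lt_mem_nhds hla), eventually_ge_atTop 2] with r hr hr2
    have hr1 : (1 : ℝ) < r := by exact_mod_cast hr2
    have hl : 0 < Real.log r := Real.log_pos hr1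
    have h1 : (r : ℝ) * Real.exp (-c r / a) ≤ M := by
      refine le_trans ?_ (hM r)
      push_cast
      gcongr
      linarith
    have h2 := Real.log_le_log (by positivity) h1
    rw [Real.log_mul (by positivity) (by positivity), Real.log_exp] at h2
    have h3 : a * Real.log r - a * Real.log M ≤ c r := by
      have h4 := mul_le_mul_of_nonneg_left h2 ha0.le
      have h5 : a * (-c r / a) = -c r := by field_simp
      rw [mul_add, h5] at h4
      linarith
    refine hr.trans_le ?_
    rw [le_div_iff₀ hl, sub_mul, div_mul_cancel₀ _ hl.ne']
    exact h3
  · have hup : Tendsto (fun r : ℕ => p i₀ r / Real.log r + (∑ i, p i 0) / Real.log r)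
        atTop (𝓝 S) := by
      simpa using hp₀.add (hlog.const_div_atTop (∑ i, p i 0))
    filter_upwards [hup.eventually (gt_mem_nhds hu₀), eventually_ge_atTop 2] with r hr hr2
    have hr1 : (1 : ℝ) < r := by exact_mod_cast hr2
    have hl : 0 < Real.log r := Real.log_pos hr1
    refine lt_of_le_of_lt ?_ hr
    rw [← add_div]
    exact div_le_div_of_nonneg_right (composition_le hpos hmono hσ hc hcm i₀ r) hl.le
end

section
/- Let (p_r)_{r≥1} and (q_r)_{r≥1} be nondecreasing positive sequences and let k be a positive integer such that s_p = lim_{r→∞} p_r^k/r and s_q = lim_{r→∞} q_r^k/r both exist and are positive real numbers. Let (c_r) be the union of (p_r) and (q_r). Then lim_{r→∞} c_r^k / r = (s_p^{−1} + s_q^{−1})^{−1}. -/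
/-!
Write `P = p ^ k`, `Q = q ^ k`, `C = c ^ k`. The limit `P n / n → s > 0` says that the counting
functions `#{n | P n < x}` and `#{n | P n ≤ x}` are both asymptotic to `x / s`; the two halves are
`lt_mul_of_le_eventually` and `lt_of_lt_mul_eventually`. With `x = C r`, every entry of value
`< x` is enumerated before step `r`, and every entry enumerated up to step `r` has value `≤ x`, so
`r` lies between the sums of the counting functions of `P` and `Q` at `x`, up to a bounded error
(`le_index_of_forall`, `index_le_of_forall`). Since `C r → ∞`, this squeezes `r / C r` to
`sp⁻¹ + sq⁻¹`, and taking inverses gives the result.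
-/

open Filter Topology

lemma tendsto_index_div {P : ℕ → ℝ} {s : ℝ} (hs : 0 < s)
    (hl : Tendsto (fun r : ℕ => P r / (r : ℝ)) atTop (𝓝 s)) :
    Tendsto (fun r : ℕ => (r : ℝ) / P r) atTop (𝓝 s⁻¹) := by
  simpa only [inv_div] using hl.inv₀ hs.ne'

/-- Upper half of the counting asymptotics: for `t > s⁻¹`, all `n` with `P n ≤ x` lie
below `t * x` once `x` is large. -/
lemma lt_mul_of_le_eventually {P : ℕ → ℝ} {s t : ℝ} (hP : ∀ n, 0 < P n) (hs : 0 < s)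
    (hl : Tendsto (fun r : ℕ => P r / (r : ℝ)) atTop (𝓝 s)) (ht : s⁻¹ < t) :
    ∀ᶠ x : ℝ in atTop, ∀ n : ℕ, P n ≤ x → (n : ℝ) < t * x := by
  have ht0 : 0 < t := (inv_pos.2 hs).trans ht
  obtain ⟨N, hN⟩ := eventually_atTop.1 ((tendsto_index_div hs hl).eventually_lt_const ht)
  filter_upwards [eventually_ge_atTop ((N : ℝ) / t)] with x hx n hn
  rcases le_or_gt N n with h | h
  · have h1 := (div_lt_iff₀ (hP n)).1 (hN n h)
    exact h1.trans_le (by gcongr)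
  · have h1 : (n : ℝ) < N := by exact_mod_cast h
    have h2 := (div_le_iff₀ ht0).1 hx
    linarith [mul_comm x t]

/-- Lower half of the counting asymptotics: for `t < s⁻¹`, all `n` below `t * x` satisfy
`P n < x` once `x` is large. -/
lemma lt_of_lt_mul_eventually {P : ℕ → ℝ} {s t : ℝ} (hP : ∀ n, 0 < P n) (hs : 0 < s)
    (hl : Tendsto (fun r : ℕ => P r / (r : ℝ)) atTop (𝓝 s)) (ht : t < s⁻¹) :
    ∀ᶠ x : ℝ in atTop, ∀ n : ℕ, (n : ℝ) < t * x → P n < x := by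
  obtain ⟨N, hN⟩ := eventually_atTop.1 ((tendsto_index_div hs hl).eventually_const_lt ht)
  have hfin : ∀ᶠ x : ℝ in atTop, ∀ n ∈ Finset.range N, P n < x :=
    (Finset.eventually_all _).2 fun n _ => eventually_gt_atTop (P n)
  filter_upwards [hfin, eventually_gt_atTop 0] with x hx hx0 n hn
  rcases le_or_gt N n with h | h
  · have h1 := (lt_div_iff₀ (hP n)).1 (hN n h)
    have ht0 : 0 < t := by
      by_contra! h0
      have := mul_nonpos_of_nonpos_of_nonneg h0 hx0.le
      linarith [Nat.cast_nonneg (α := ℝ) n]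
    exact lt_of_mul_lt_mul_left (h1.trans hn) ht0.le
  · exact hx n (Finset.mem_range.2 h)

/-- If all entries `P n` with `n < u` and `Q n` with `n < v` have value below `C r`, they are
enumerated before step `r`, so there are at most `r` of them. -/
lemma le_index_of_forall {P Q C : ℕ → ℝ} {τ : ℕ → ℕ ⊕ ℕ} (hτ : Function.Bijective τ)
    (hC : ∀ r, C r = Sum.elim P Q (τ r)) (hm : Monotone C) {r : ℕ} {u v : ℝ}
    (hu : ∀ n : ℕ, (n : ℝ) < u → P n < C r) (hv : ∀ n : ℕ, (n : ℝ) < v → Q n < C r) :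
    u + v ≤ r := by
  have hsub : (Finset.range ⌈u⌉₊).disjSum (Finset.range ⌈v⌉₊) ⊆ (Finset.range r).image τ := by
    intro z hz
    obtain ⟨i, rfl⟩ := hτ.2 z
    refine Finset.mem_image_of_mem τ (Finset.mem_range.2 (hm.reflect_lt ?_))
    rw [hC i]
    rcases h : τ i with n | n <;> rw [h] at hz
    · exact hu n (Nat.lt_ceil.1 (Finset.mem_range.1 (Finset.inl_mem_disjSum.1 hz)))
    · exact hv n (Nat.lt_ceil.1 (Finset.mem_range.1 (Finset.inr_mem_disjSum.1 hz)))
  have h1 := (Finset.card_le_card hsub).trans Finset.card_image_le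
  simp only [Finset.card_disjSum, Finset.card_range] at h1
  have h2 : (⌈u⌉₊ : ℝ) + ⌈v⌉₊ ≤ r := by exact_mod_cast h1
  linarith [Nat.le_ceil u, Nat.le_ceil v]

/-- If all entries of value at most `C r` are among the `P n` with `n < u` and the `Q n` with
`n < v`, then the `r + 1` entries enumerated up to step `r` are among them. -/
lemma index_le_of_forall {P Q C : ℕ → ℝ} {τ : ℕ → ℕ ⊕ ℕ} (hτ : Function.Bijective τ)
    (hC : ∀ r, C r = Sum.elim P Q (τ r)) (hm : Monotone C) {r : ℕ} {u v : ℝ}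
    (hu0 : 0 ≤ u) (hv0 : 0 ≤ v)
    (hu : ∀ n : ℕ, P n ≤ C r → (n : ℝ) < u) (hv : ∀ n : ℕ, Q n ≤ C r → (n : ℝ) < v) :
    (r : ℝ) ≤ u + v + 1 := by
  have hsub : (Finset.range (r + 1)).image τ ⊆
      (Finset.range ⌈u⌉₊).disjSum (Finset.range ⌈v⌉₊) := by
    intro z hz
    obtain ⟨i, hi, rfl⟩ := Finset.mem_image.1 hz
    have hle := hm (Nat.lt_succ_iff.1 (Finset.mem_range.1 hi))
    rw [hC i] at hle
    rcases h : τ i with n | n <;> rw [h] at hle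
    · exact Finset.inl_mem_disjSum.2 (Finset.mem_range.2 (Nat.lt_ceil.2 (hu n hle)))
    · exact Finset.inr_mem_disjSum.2 (Finset.mem_range.2 (Nat.lt_ceil.2 (hv n hle)))
  have h1 := Finset.card_le_card hsub
  rw [Finset.card_image_of_injective _ hτ.1] at h1
  simp only [Finset.card_disjSum, Finset.card_range] at h1
  have h2 : (r : ℝ) + 1 ≤ ⌈u⌉₊ + ⌈v⌉₊ := by exact_mod_cast h1
  linarith [Nat.ceil_lt_add_one hu0, Nat.ceil_lt_add_one hv0]

/-- The case `k = 1`; the general one follows by passing to `k`-th powers. -/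
lemma tendsto_union_div {P Q C : ℕ → ℝ} {τ : ℕ → ℕ ⊕ ℕ} {sp sq : ℝ}
    (hP : ∀ n, 0 < P n) (hQ : ∀ n, 0 < Q n) (hsp : 0 < sp) (hsq : 0 < sq)
    (hlp : Tendsto (fun r : ℕ => P r / (r : ℝ)) atTop (𝓝 sp))
    (hlq : Tendsto (fun r : ℕ => Q r / (r : ℝ)) atTop (𝓝 sq))
    (hτ : Function.Bijective τ) (hC : ∀ r, C r = Sum.elim P Q (τ r)) (hm : Monotone C) :
    Tendsto (fun r : ℕ => C r / (r : ℝ)) atTop (𝓝 (sp⁻¹ + sq⁻¹)⁻¹) := by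
  have hPtop : Tendsto P atTop atTop := by
    refine (hlp.pos_mul_atTop hsp tendsto_natCast_atTop_atTop).congr' ?_
    filter_upwards [eventually_ne_atTop 0] with n hn
    exact div_mul_cancel₀ _ (Nat.cast_ne_zero.2 hn)
  have hCtop : Tendsto C atTop atTop := by
    refine tendsto_atTop_atTop_of_monotone hm fun M => ?_
    obtain ⟨n, hn⟩ := (hPtop.eventually_ge_atTop M).exists
    obtain ⟨r, hr⟩ := hτ.2 (Sum.inl n)
    exact ⟨r, by simpa [hC r, hr] using hn⟩
  suffices h : Tendsto (fun r : ℕ => (r : ℝ) / C r) atTop (𝓝 (sp⁻¹ + sq⁻¹)) by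
    have h0 : sp⁻¹ + sq⁻¹ ≠ 0 := by positivity
    simpa only [inv_div] using h.inv₀ h0
  refine tendsto_order.2 ⟨fun a ha => ?_, fun a ha => ?_⟩
  · obtain ⟨d, hd0, hd⟩ : ∃ d : ℝ, 0 < d ∧ a < (sp⁻¹ - d) + (sq⁻¹ - d) :=
      ⟨(sp⁻¹ + sq⁻¹ - a) / 4, by linarith, by linarith⟩
    filter_upwards [hCtop.eventually
        (lt_of_lt_mul_eventually hP hsp hlp (sub_lt_self sp⁻¹ hd0)), hCtop.eventually
        (lt_of_lt_mul_eventually hQ hsq hlq (sub_lt_self sq⁻¹ hd0)),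
        hCtop.eventually_gt_atTop 0] with r hp hq h0
    have h1 := le_index_of_forall hτ hC hm hp hq
    rw [← add_mul] at h1
    exact hd.trans_le ((le_div_iff₀ h0).2 h1)
  · -- The third `d` absorbs the bounded error, as `1 < d * C r` for large `r`.
    obtain ⟨d, hd0, hd⟩ : ∃ d : ℝ, 0 < d ∧ (sp⁻¹ + d) + (sq⁻¹ + d) + d < a :=
      ⟨(a - (sp⁻¹ + sq⁻¹)) / 4, by linarith, by linarith⟩
    filter_upwards [hCtop.eventually
        (lt_mul_of_le_eventually hP hsp hlp (lt_add_of_pos_right sp⁻¹ hd0)), hCtop.eventually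
        (lt_mul_of_le_eventually hQ hsq hlq (lt_add_of_pos_right sq⁻¹ hd0)),
        hCtop.eventually_gt_atTop 0, hCtop.eventually_gt_atTop (1 / d)] with r hp hq h0 h1
    have h2 := index_le_of_forall hτ hC hm (by positivity) (by positivity) hp hq
    have h3 := (div_lt_iff₀ hd0).1 h1
    refine lt_of_le_of_lt ((div_le_iff₀ h0).2 ?_) hd
    linarith

/-- let `(p_r)`, `(q_r)` be nondecreasing positive sequences and
`k ≥ 1` with `p_r^k/r → s_p ∈ (0,∞)` and `q_r^k/r → s_q ∈ (0,∞)`, and let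
`(c_r)` be their union: a nondecreasing enumeration (via a bijection
`τ : ℕ → ℕ ⊕ ℕ`) of all entries of both sequences.  Then
`lim_{r→∞} c_r^k/r = (s_p⁻¹ + s_q⁻¹)⁻¹`. -/
theorem stmt15 (p q : ℕ → ℝ)
    (hppos : ∀ n, 0 < p n) (hqpos : ∀ n, 0 < q n)
    (hpmono : Monotone p) (hqmono : Monotone q)
    (k : ℕ) (hk : 1 ≤ k)
    (sp sq : ℝ) (hsp : 0 < sp) (hsq : 0 < sq)
    (hlp : Tendsto (fun r : ℕ => p r ^ k / (r : ℝ)) atTop (nhds sp))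
    (hlq : Tendsto (fun r : ℕ => q r ^ k / (r : ℝ)) atTop (nhds sq))
    (c : ℕ → ℝ) (τ : ℕ → ℕ ⊕ ℕ) (hτ : Function.Bijective τ)
    (hc : ∀ r, c r = Sum.elim p q (τ r)) (hcm : Monotone c) :
    Tendsto (fun r : ℕ => c r ^ k / (r : ℝ)) atTop (nhds (sp⁻¹ + sq⁻¹)⁻¹) := by
  have hcpos : ∀ r, 0 < c r := fun r => by
    rw [hc r]
    rcases τ r with n | n
    · exact hppos n
    · exact hqpos n
  refine tendsto_union_div (P := fun n => p n ^ k) (Q := fun n => q n ^ k)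
    (C := fun n => c n ^ k) (fun n => pow_pos (hppos n) k) (fun n => pow_pos (hqpos n) k)
    hsp hsq hlp hlq hτ (fun r => ?_) fun i j hij => pow_le_pow_left₀ (hcpos i).le (hcm hij) k
  rw [hc r]
  rcases τ r with n | n <;> rfl
end

section
/- Let (p_r)_{r≥1} and (q_r)_{r≥1} be nondecreasing positive sequences and let k_p > k_q be positive integers such that s_p = lim_{r→∞} p_r^{k_p}/r and s_q = lim_{r→∞} q_r^{k_q}/r both exist and are positive real numbers. Let (c_r) be the union of (p_r) and (q_r). Then lim_{r→∞} c_r^{k_p} / r = s_p. -/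
open Filter Topology

/-!
The union grows like `p` because `q` contributes negligibly many terms. Since `r + 1` distinct
entries `p 0, …, p r` occur in `c`, one of them occurs at position at least `r`, so `c r ≤ p r`.
Conversely, let `a` and `b` be the numbers of entries of `p` and of `q` among the first `r` terms
of `c`. Then `q (b - 1) ≤ c r ≤ p r`, so `b` is at most of order `q (b - 1) ^ kq ≤ p r ^ kq = o(r)`
(as `kq < kp`), whence `a / r → 1`. Also `p (a - 1) ≤ c r`, so `c r ^ kp / r` is squeezed between
`p (a - 1) ^ kp / r` and `p r ^ kp / r`, both of which tend to `sp`. The counting steps all use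
`exists_card_le_of_injOn`.
-/

/-- Pigeonhole: an injective map into `ℕ` on a set of size `n > 0` takes a value at least
`n - 1`. -/
lemma exists_card_le_of_injOn (S : Finset ℕ) (hS : 0 < S.card) (f : ℕ → ℕ)
    (hf : Set.InjOn f S) : ∃ i ∈ S, S.card - 1 ≤ f i := by
  by_contra! h
  have h1 := Finset.card_le_card_of_injOn (t := Finset.range (S.card - 1)) f
    (fun i hi => by simpa using h i hi) hf
  rw [Finset.card_range] at h1
  omega

/-- If `u` has a positive growth rate `u r ^ k / r → s`, then `u → ∞`. -/
lemma tendsto_atTop_of_pow_div (u : ℕ → ℝ) (hu : ∀ n, 0 < u n) (k : ℕ) (s : ℝ) (hs : 0 < s)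
    (h : Tendsto (fun r : ℕ => u r ^ k / (r : ℝ)) atTop (nhds s)) : Tendsto u atTop atTop := by
  have h1 : Tendsto (fun r : ℕ => u r ^ k / (r : ℝ) * r) atTop atTop :=
    h.pos_mul_atTop hs tendsto_natCast_atTop_atTop
  rw [tendsto_atTop]
  intro B
  filter_upwards [h1.eventually_gt_atTop (|B| ^ k), eventually_gt_atTop 0] with r hr hr0
  rw [div_mul_cancel₀ _ (by positivity)] at hr
  exact (le_abs_self B).trans (lt_of_pow_lt_pow_left₀ k (hu r).le hr).le

/-- let `(p_r)`, `(q_r)` be nondecreasing positive sequences and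
`k_p > k_q ≥ 1` with `p_r^{k_p}/r → s_p ∈ (0,∞)` and `q_r^{k_q}/r → s_q ∈ (0,∞)`,
and let `(c_r)` be their union.  Then `lim_{r→∞} c_r^{k_p}/r = s_p`. -/
theorem stmt16 (p q : ℕ → ℝ)
    (hppos : ∀ n, 0 < p n) (hqpos : ∀ n, 0 < q n)
    (hpmono : Monotone p) (hqmono : Monotone q)
    (kp kq : ℕ) (hkq : 1 ≤ kq) (hkpq : kq < kp)
    (sp sq : ℝ) (hsp : 0 < sp) (hsq : 0 < sq)
    (hlp : Tendsto (fun r : ℕ => p r ^ kp / (r : ℝ)) atTop (nhds sp))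
    (hlq : Tendsto (fun r : ℕ => q r ^ kq / (r : ℝ)) atTop (nhds sq))
    (c : ℕ → ℝ) (τ : ℕ → ℕ ⊕ ℕ) (hτ : Function.Bijective τ)
    (hc : ∀ r, c r = Sum.elim p q (τ r)) (hcm : Monotone c) :
    Tendsto (fun r : ℕ => c r ^ kp / (r : ℝ)) atTop (nhds sp) := by
  have hcpos : ∀ r, 0 < c r := by
    intro r
    rw [hc]
    rcases τ r with j | j
    · exact hppos j
    · exact hqpos j
  have hup : ∀ r, c r ≤ p r := by
    intro r
    obtain ⟨σ, -, hσ⟩ := Function.bijective_iff_has_inverse.mp hτ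
    obtain ⟨j, hj, hjr⟩ := exists_card_le_of_injOn (Finset.range (r + 1)) (by simp)
      (fun j => σ (Sum.inl j)) (fun i _ j _ hij => Sum.inl_injective (hσ.injective hij))
    simp only [Finset.card_range, Nat.add_sub_cancel, Finset.mem_range] at hj hjr
    calc c r ≤ c (σ (Sum.inl j)) := hcm hjr
      _ = p j := by rw [hc, hσ]; rfl
      _ ≤ p r := hpmono (by omega)
  set A : ℕ → Finset ℕ := fun r => (Finset.range r).filter (fun i => (τ i).isLeft = true) with hA
  set B : ℕ → Finset ℕ := fun r => (Finset.range r).filter (fun i => ¬ (τ i).isLeft = true) with hB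
  have hAB : ∀ r, (A r).card + (B r).card = r := by
    intro r
    have := Finset.card_filter_add_card_filter_not (s := Finset.range r)
      (fun i => (τ i).isLeft = true)
    simpa [hA, hB] using this
  have hpa : ∀ r, 0 < (A r).card → p ((A r).card - 1) ≤ c r := by
    intro r h
    obtain ⟨i, hi, hj⟩ := exists_card_le_of_injOn (A r) h (fun i => Sum.elim id id (τ i)) (by
      intro i hi j hj hij
      apply hτ.injective
      simp only [hA, Finset.coe_filter, Set.mem_setOf_eq] at hi hj
      obtain ⟨x, hx⟩ := Sum.isLeft_iff.mp hi.2
      obtain ⟨y, hy⟩ := Sum.isLeft_iff.mp hj.2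
      simp_all)
    simp only [hA, Finset.mem_filter, Finset.mem_range] at hi
    obtain ⟨x, hx⟩ := Sum.isLeft_iff.mp hi.2
    have h2 : c i = p x := by rw [hc, hx]; rfl
    simp only [hx, Sum.elim_inl, id] at hj
    exact (hpmono hj).trans (h2 ▸ hcm hi.1.le)
  have hqb : ∀ r, 0 < (B r).card → q ((B r).card - 1) ≤ c r := by
    intro r h
    obtain ⟨i, hi, hj⟩ := exists_card_le_of_injOn (B r) h (fun i => Sum.elim id id (τ i)) (by
      intro i hi j hj hij
      apply hτ.injective
      simp only [hB, Finset.coe_filter, Set.mem_setOf_eq, Sum.not_isLeft] at hi hj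
      obtain ⟨x, hx⟩ := Sum.isRight_iff.mp hi.2
      obtain ⟨y, hy⟩ := Sum.isRight_iff.mp hj.2
      simp_all)
    simp only [hB, Finset.mem_filter, Finset.mem_range, Sum.not_isLeft] at hi
    obtain ⟨x, hx⟩ := Sum.isRight_iff.mp hi.2
    have h2 : c i = q x := by rw [hc, hx]; rfl
    simp only [hx, Sum.elim_inr, id] at hj
    exact (hqmono hj).trans (h2 ▸ hcm hi.1.le)
  obtain ⟨C, hC0, hC⟩ : ∃ C : ℝ, 0 ≤ C ∧ ∀ n : ℕ, (n : ℝ) ≤ C * q n ^ kq := by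
    obtain ⟨C, hC⟩ := (hlq.inv₀ hsq.ne').bddAbove_range
    have hC' : ∀ n : ℕ, (n : ℝ) / q n ^ kq ≤ C := fun n => by
      simpa using hC (Set.mem_range_self n)
    refine ⟨C, by simpa using hC' 0, fun n => ?_⟩
    exact (div_le_iff₀ (pow_pos (hqpos n) _)).mp (hC' n)
  have hb : ∀ r, ((B r).card : ℝ) ≤ C * p r ^ kq + 1 := by
    intro r
    rcases Nat.eq_zero_or_pos (B r).card with h | h
    · rw [h]
      have := mul_nonneg hC0 (pow_pos (hppos r) kq).le
      push_cast
      linarith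
    · have h1 := hC ((B r).card - 1)
      have h2 : q ((B r).card - 1) ^ kq ≤ p r ^ kq :=
        pow_le_pow_left₀ (hqpos _).le ((hqb r h).trans (hup r)) _
      have h3 := mul_le_mul_of_nonneg_left h2 hC0
      rw [Nat.cast_sub h] at h1
      push_cast at h1
      linarith
  have hpq : Tendsto (fun r : ℕ => p r ^ kq / (r : ℝ)) atTop (nhds 0) := by
    have h1 : Tendsto (fun r => p r ^ (kp - kq)) atTop atTop :=
      (tendsto_pow_atTop (by omega)).comp (tendsto_atTop_of_pow_div p hppos kp sp hsp hlp)
    refine (hlp.div_atTop h1).congr fun r => ?_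
    have h2 : p r ^ kp = p r ^ kq * p r ^ (kp - kq) := by
      rw [← pow_add]; congr 1; omega
    have h3 := (pow_pos (hppos r) (kp - kq)).ne'
    rw [h2, mul_div_right_comm, mul_div_cancel_right₀ _ h3]
  set m : ℕ → ℕ := fun r => (A r).card - 1 with hm
  have hmr : Tendsto (fun r : ℕ => (m r : ℝ) / r) atTop (nhds 1) := by
    have hlow : Tendsto (fun r : ℕ => 1 - C * (p r ^ kq / (r : ℝ)) - 2 / (r : ℝ)) atTop
        (nhds 1) := by
      simpa using ((hpq.const_mul C).const_sub 1).sub (tendsto_const_div_atTop_nhds_zero_nat 2)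
    refine tendsto_of_tendsto_of_tendsto_of_le_of_le' hlow tendsto_const_nhds ?_ ?_
    · filter_upwards [eventually_gt_atTop 0] with r hr
      have hr' : (0 : ℝ) < r := by exact_mod_cast hr
      have h1 : (r : ℝ) ≤ m r + 1 + (B r).card := by
        have := hAB r
        have h2 : r ≤ m r + 1 + (B r).card := by simp only [hm]; omega
        exact_mod_cast h2
      rw [le_div_iff₀ hr']
      have h4 : (1 - C * (p r ^ kq / (r : ℝ)) - 2 / (r : ℝ)) * r = r - C * p r ^ kq - 2 := by
        field_simp
      linarith [hb r]
    · filter_upwards [eventually_gt_atTop 0] with r hr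
      have hr' : (0 : ℝ) < r := by exact_mod_cast hr
      rw [div_le_one hr']
      have h2 : m r ≤ r := by have := hAB r; simp only [hm]; omega
      exact_mod_cast h2
  have hmtop : Tendsto m atTop atTop := by
    have h1 : Tendsto (fun r : ℕ => (m r : ℝ) / r * r) atTop atTop :=
      hmr.pos_mul_atTop one_pos tendsto_natCast_atTop_atTop
    rw [← tendsto_natCast_atTop_iff (R := ℝ)]
    refine h1.congr' ?_
    filter_upwards [eventually_gt_atTop 0] with r hr
    exact div_mul_cancel₀ _ (by positivity)
  have hlow : Tendsto (fun r : ℕ => p (m r) ^ kp / (m r : ℝ) * ((m r : ℝ) / r)) atTop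
      (nhds sp) := by
    simpa using (hlp.comp hmtop).mul hmr
  refine tendsto_of_tendsto_of_tendsto_of_le_of_le' hlow hlp ?_ ?_
  · filter_upwards [hmtop.eventually_gt_atTop 0] with r hr
    have hm0 : (m r : ℝ) ≠ 0 := by exact_mod_cast hr.ne'
    rw [div_mul_div_cancel₀ hm0]
    have h1 : p (m r) ≤ c r := hpa r (by simp only [hm] at hr; omega)
    exact div_le_div_of_nonneg_right (pow_le_pow_left₀ (hppos _).le h1 _) (Nat.cast_nonneg r)
  · exact Eventually.of_forall fun r =>
      div_le_div_of_nonneg_right (pow_le_pow_left₀ (hcpos r).le (hup r) _) (Nat.cast_nonneg r)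
end

section
/- Let (p_r)_{r≥1} and (q_r)_{r≥1} be nondecreasing positive sequences such that s_p = lim_{r→∞} p_r/log r and s_q = lim_{r→∞} q_r/log r exist in (0,∞], with at least one of s_p, s_q finite. Let (c_r) be the union of (p_r) and (q_r). Then lim_{r→∞} c_r / log r = min{s_p, s_q}. -/
/-!
The union satisfies the two-sided bound
`min (p ⌊r/2⌋) (q ⌊r/2⌋) ≤ c r ≤ min (p r) (q r)`, by counting.
Upper bound (`union_le`): the `r + 1` entries `p 0, …, p r` occupy distinct positions in `c`, so
one of them sits at a position `≥ r`. Lower bound (`le_union`): the `r + 1` entries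
`c 0, …, c r` cannot all come from the `2 ⌊r/2⌋ ≤ r` entries of `p` and `q` of index `< ⌊r/2⌋`.
Since `log ⌊r/2⌋ / log r → 1` (`tendsto_log_half_div_log`), dividing by `log r` makes both bounds
converge to `min sp sq`, and the claim follows by squeezing.
-/

open Filter Topology

/-- Each constituent `p` of a union dominates the union termwise; `f n` is the position of `p n`
in `c`. -/
lemma union_le {p c : ℕ → ℝ} (hp : Monotone p) (hc : Monotone c) (f : ℕ → ℕ)
    (hf : Function.Injective f) (h : ∀ n, c (f n) = p n) (r : ℕ) : c r ≤ p r := by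
  obtain ⟨i, hi, hri⟩ : ∃ i ∈ Finset.range (r + 1), r ≤ f i := by
    by_contra! hlt
    have hcard := Finset.card_le_card_of_injOn (s := Finset.range (r + 1))
      (t := Finset.range r) f (fun i hi => by simpa using hlt i hi) hf.injOn
    simp at hcard
  calc c r ≤ c (f i) := hc hri
    _ = p i := h i
    _ ≤ p r := hp (by simpa [Nat.lt_succ_iff] using hi)

lemma le_union {p q c : ℕ → ℝ} (hp : Monotone p) (hq : Monotone q) (hcm : Monotone c)
    {τ : ℕ → ℕ ⊕ ℕ} (hτ : Function.Injective τ) (hc : ∀ r, c r = Sum.elim p q (τ r)) (r : ℕ) :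
    min (p (r / 2)) (q (r / 2)) ≤ c r := by
  obtain ⟨k, hk, hkn⟩ : ∃ k ∈ Finset.range (r + 1),
      τ k ∉ (Finset.range (r / 2)).disjSum (Finset.range (r / 2)) := by
    by_contra! hin
    have hcard := Finset.card_le_card_of_injOn (s := Finset.range (r + 1)) τ hin hτ.injOn
    simp only [Finset.card_disjSum, Finset.card_range] at hcard
    omega
  have hkr : c k ≤ c r := hcm (by simpa [Nat.lt_succ_iff] using hk)
  refine le_trans ?_ hkr
  rw [hc k]
  rcases hτk : τ k with i | i
  · rw [hτk] at hkn
    exact (min_le_left _ _).trans (hp (by simpa using hkn))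
  · rw [hτk] at hkn
    exact (min_le_right _ _).trans (hq (by simpa using hkn))

lemma tendsto_log_half_div_log :
    Tendsto (fun r : ℕ => Real.log (r / 2 : ℕ) / Real.log r) atTop (𝓝 1) := by
  have hlog : Tendsto (fun r : ℕ => Real.log r) atTop atTop :=
    Real.tendsto_log_atTop.comp tendsto_natCast_atTop_atTop
  have hlow : Tendsto (fun r : ℕ => 1 - Real.log 4 / Real.log r) atTop (𝓝 1) := by
    simpa using tendsto_const_nhds.sub (hlog.const_div_atTop (Real.log 4))
  refine tendsto_of_tendsto_of_tendsto_of_le_of_le' hlow tendsto_const_nhds ?_ ?_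
  · filter_upwards [eventually_ge_atTop 2] with r hr
    have hr0 : 0 < Real.log r := Real.log_pos (by exact_mod_cast hr)
    have hhalf : 0 < r / 2 := by omega
    have hle : (r : ℝ) ≤ 4 * (r / 2 : ℕ) := by
      exact_mod_cast (by omega : r ≤ 4 * (r / 2))
    have hlogle := Real.log_le_log (by positivity) hle
    rw [Real.log_mul (by norm_num) (by positivity)] at hlogle
    rw [le_div_iff₀ hr0, sub_mul, div_mul_cancel₀ _ hr0.ne']
    linarith
  · filter_upwards [eventually_ge_atTop 2] with r hr
    have hr0 : 0 < Real.log r := Real.log_pos (by exact_mod_cast hr)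
    have hhalf : 0 < r / 2 := by omega
    rw [div_le_one hr0]
    exact Real.log_le_log (by positivity) (by exact_mod_cast Nat.div_le_self r 2)

lemma tendsto_half_div_log {p : ℕ → ℝ} {s : EReal}
    (h : Tendsto (fun r : ℕ => ((p r / Real.log r : ℝ) : EReal)) atTop (𝓝 s)) :
    Tendsto (fun r : ℕ => ((p (r / 2) / Real.log r : ℝ) : EReal)) atTop (𝓝 s) := by
  have hhalf : Tendsto (fun r : ℕ => r / 2) atTop atTop :=
    Nat.tendsto_div_const_atTop (by norm_num)
  have hratio : Tendsto (fun r : ℕ => ((Real.log (r / 2 : ℕ) / Real.log r : ℝ) : EReal)) atTop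
      (𝓝 ((1 : ℝ) : EReal)) :=
    (continuous_coe_real_ereal.tendsto 1).comp tendsto_log_half_div_log
  -- The limit `s` may be infinite; multiplication on `EReal` is continuous at `(s, 1)`.
  have hmul : Tendsto (fun x : EReal × EReal => x.1 * x.2) (𝓝 (s, ((1 : ℝ) : EReal)))
      (𝓝 (s * ((1 : ℝ) : EReal))) :=
    EReal.continuousAt_mul (p := (s, ((1 : ℝ) : EReal))) (.inr (EReal.coe_ne_bot 1))
      (.inr (EReal.coe_ne_top 1)) (by simp) (by simp)
  have hprod := hmul.comp ((h.comp hhalf).prodMk_nhds hratio)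
  rw [EReal.coe_one, mul_one] at hprod
  refine hprod.congr' ?_
  -- For `r ≥ 4`, `log ⌊r/2⌋` is nonzero and cancels.
  filter_upwards [eventually_ge_atTop 4] with r hr
  have h2 : 1 < r / 2 := by omega
  have hne : Real.log (r / 2 : ℕ) ≠ 0 := (Real.log_pos (by exact_mod_cast h2)).ne'
  simp only [Function.comp]
  rw [← EReal.coe_mul, div_mul_div_cancel₀ hne]

/-- let `(p_r)`, `(q_r)` be nondecreasing positive sequences such
that `s_p = lim p_r/log r` and `s_q = lim q_r/log r` exist in `(0,∞]` (as
extended reals), at least one of them finite, and let `(c_r)` be their union.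
Then `lim_{r→∞} c_r/log r = min{s_p, s_q}`. -/
theorem stmt17 (p q : ℕ → ℝ)
    (hppos : ∀ n, 0 < p n) (hqpos : ∀ n, 0 < q n)
    (hpmono : Monotone p) (hqmono : Monotone q)
    (sp sq : EReal) (hsp : 0 < sp) (hsq : 0 < sq)
    (hfin : sp ≠ ⊤ ∨ sq ≠ ⊤)
    (hlp : Tendsto (fun r : ℕ => ((p r / Real.log r : ℝ) : EReal)) atTop (nhds sp))
    (hlq : Tendsto (fun r : ℕ => ((q r / Real.log r : ℝ) : EReal)) atTop (nhds sq))
    (c : ℕ → ℝ) (τ : ℕ → ℕ ⊕ ℕ) (hτ : Function.Bijective τ)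
    (hc : ∀ r, c r = Sum.elim p q (τ r)) (hcm : Monotone c) :
    Tendsto (fun r : ℕ => ((c r / Real.log r : ℝ) : EReal)) atTop
      (nhds (min sp sq)) := by
  obtain ⟨σ, hl, hr⟩ := Function.bijective_iff_has_inverse.mp hτ
  have hcσ : ∀ x, c (σ x) = Sum.elim p q x := fun x => by rw [hc, hr x]
  have hcp := union_le hpmono hcm (fun n => σ (Sum.inl n))
    (hr.injective.comp Sum.inl_injective) (fun n => hcσ _)
  have hcq := union_le hqmono hcm (fun n => σ (Sum.inr n))
    (hr.injective.comp Sum.inr_injective) (fun n => hcσ _)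
  refine tendsto_of_tendsto_of_tendsto_of_le_of_le
    ((tendsto_half_div_log hlp).min (tendsto_half_div_log hlq)) (hlp.min hlq) ?_ ?_
  · intro r
    have hlog : 0 ≤ Real.log r := Real.log_natCast_nonneg r
    rcases min_le_iff.mp (le_union hpmono hqmono hcm hτ.injective hc r) with h | h
    · exact (min_le_left _ _).trans
        (EReal.coe_le_coe_iff.mpr (div_le_div_of_nonneg_right h hlog))
    · exact (min_le_right _ _).trans
        (EReal.coe_le_coe_iff.mpr (div_le_div_of_nonneg_right h hlog))
  · intro r
    have hlog : 0 ≤ Real.log r := Real.log_natCast_nonneg r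
    exact le_min (EReal.coe_le_coe_iff.mpr (div_le_div_of_nonneg_right (hcp r) hlog))
      (EReal.coe_le_coe_iff.mpr (div_le_div_of_nonneg_right (hcq r) hlog))
end

section
/- Let P = (p_ij) be an n×n irreducible column-stochastic matrix (p_ij ≥ 0, Σ_i p_ij = 1 for every j) all of whose positive entries satisfy p_ij < 1, regarded as the transition matrix of a Markov chain with an edge from state j to state i exactly when p_ij > 0. Fix states v₁, v₂, and for a path x = (edges from v₁ to v₂) let Pr(x) be the product of the transition probabilities along its edges. Enumerate the paths from v₁ to v₂ as x₁, x₂, x₃, … in nonincreasing order of probability (a bijective enumeration with r ↦ Pr(x_r) nonincreasing). Then lim_{r→∞} (−log Pr(x_r)) / log r = 1; that is, the path probabilities obey an asymptotic power law Pr(x_r) ≈ r^{−1}. -/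
/-!
Write `p r` for the probability of the `r`-th path. Two counting estimates give the limit.

* Extending a path backwards by one edge shows that the number of paths from `v` to `v₂` of
  probability at least `δ` satisfies `N v δ ≥ ∑ i, N i (δ / P i v)`. The columns of `P` sum to `1`,
  so the bound `N v δ ≥ c / δ` reproduces itself under this recursion, and it holds for `δ` of
  moderate size because every state is joined to `v₂` by some path (`exists_many_paths`).
  Consequently `r * p r` is bounded below by a positive constant.
* The paths with a given number of edges leaving a given state have total probability at most `1`
  (`sum_prob_le_one`), and a path of probability at least `p` has at most `-log p / a` edges, where
  `exp (-a) < 1` bounds all entries of `P`. Hence `(r + 1) * p r ≤ -log (p r) / a + 2`.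

With `t = -log (p r)` and `u = log r` these say `t ≤ u + C` and `u ≤ t + log (t / a + 2)`, and
`t / u → 1` follows by squeezing.
-/

open Filter Topology

/-- Paths from `v₁` to `v₂` in the support graph of a transition matrix `P`
(an edge from `j` to `i` iff `P i j > 0`), recorded as the list of visited
states (length `≥ 2` means at least one transition). -/
def PPath {n : ℕ} (P : Matrix (Fin n) (Fin n) ℝ) (v₁ v₂ : Fin n) :
    Set (List (Fin n)) :=
  {x | 2 ≤ x.length ∧ x.Chain' (fun a b => 0 < P b a) ∧
    x.head? = some v₁ ∧ x.getLast? = some v₂}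

/-- The probability of a path: the product of the transition probabilities
along its edges. -/
def PProb {n : ℕ} (P : Matrix (Fin n) (Fin n) ℝ) (x : List (Fin n)) : ℝ :=
  ((x.zip x.tail).map fun q => P q.2 q.1).prod

section PathLemmas

variable {n : ℕ} {P : Matrix (Fin n) (Fin n) ℝ}

lemma PProb_singleton (v : Fin n) : PProb P [v] = 1 := by simp [PProb]

lemma PProb_cons (v i : Fin n) (x : List (Fin n)) (hx : x.head? = some i) :
    PProb P (v :: x) = P i v * PProb P x := by
  cases x with
  | nil => simp at hx
  | cons a l =>
    simp only [List.head?_cons, Option.some.injEq] at hx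
    subst hx
    simp [PProb]

lemma cons_mem_PPath {v i w : Fin n} {x : List (Fin n)} (hx : x ∈ PPath P i w)
    (h : 0 < P i v) : v :: x ∈ PPath P v w := by
  obtain ⟨h1, h2, h3, h4⟩ := hx
  cases x with
  | nil => simp at h3
  | cons a l =>
    simp only [List.head?_cons, Option.some.injEq] at h3
    subst h3
    refine ⟨by simp, ?_, by simp, ?_⟩
    · exact List.isChain_cons_cons.2 ⟨h, h2⟩
    · rw [List.getLast?_cons_cons]; exact h4

lemma PProb_pos_of_chain (x : List (Fin n)) (hx : x.IsChain (fun a b => 0 < P b a)) :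
    0 < PProb P x := by
  induction x with
  | nil => simp [PProb]
  | cons v x ih =>
    cases x with
    | nil => simp [PProb]
    | cons a l =>
      rw [PProb_cons v a _ rfl]
      rw [List.isChain_cons_cons] at hx
      exact mul_pos hx.1 (ih hx.2)

lemma PProb_nonneg (hnn : ∀ i j, 0 ≤ P i j) (x : List (Fin n)) : 0 ≤ PProb P x := by
  apply List.prod_nonneg
  intro a ha
  simp only [List.mem_map] at ha
  obtain ⟨q, -, rfl⟩ := ha
  exact hnn _ _

lemma PProb_le_pow (hnn : ∀ i j, 0 ≤ P i j) {q : ℝ} (hq0 : 0 ≤ q) (hq : ∀ i j, P i j ≤ q)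
    (x : List (Fin n)) : PProb P x ≤ q ^ (x.length - 1) := by
  induction x with
  | nil => simp [PProb]
  | cons v x ih =>
    cases x with
    | nil => simp [PProb]
    | cons a l =>
      rw [PProb_cons v a _ rfl]
      have e : (v :: a :: l).length - 1 = ((a :: l).length - 1) + 1 := by simp
      rw [e, pow_succ']
      exact mul_le_mul (hq _ _) ih (PProb_nonneg hnn _) hq0

/-- A positive entry of a positive power of `P` is witnessed by a path. -/
lemma exists_path_of_pow_pos (hnn : ∀ i j, 0 ≤ P i j) (k : ℕ) (i j : Fin n)
    (h : 0 < (P ^ (k + 1)) i j) : ∃ x, x ∈ PPath P j i := by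
  induction k generalizing j with
  | zero =>
    refine ⟨[j, i], by simp, ?_, by simp, by simp⟩
    have h' : 0 < P i j := by simpa using h
    exact List.isChain_pair.2 h'
  | succ k ih =>
    rw [pow_succ, Matrix.mul_apply] at h
    obtain ⟨l, -, hl⟩ := Finset.exists_lt_of_sum_lt (s := Finset.univ) (f := fun _ => (0 : ℝ))
      (g := fun l => (P ^ (k + 1)) i l * P l j) (by simpa using h)
    have hP : 0 < P l j := by
      rcases (hnn l j).lt_or_eq with h0 | h0
      · exact h0
      · simp [← h0] at hl
    obtain ⟨x, hx⟩ := ih l (pos_of_mul_pos_left hl hP.le)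
    exact ⟨j :: x, cons_mem_PPath hx hP⟩

/-- All state sequences with exactly `k` transitions starting at the given state. -/
def stateSeqs (n : ℕ) : ℕ → Fin n → Finset (List (Fin n))
  | 0, v => {[v]}
  | k + 1, v => Finset.univ.biUnion fun i => (stateSeqs n k i).image (List.cons v)

lemma mem_stateSeqs (k : ℕ) (v : Fin n) (x : List (Fin n)) :
    x ∈ stateSeqs n k v ↔ x.length = k + 1 ∧ x.head? = some v := by
  induction k generalizing v x with
  | zero =>
    simp only [stateSeqs, Finset.mem_singleton]
    constructor
    · rintro rfl; simp
    · rintro ⟨h1, h2⟩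
      obtain ⟨a, rfl⟩ := List.length_eq_one_iff.1 h1
      simpa using h2
  | succ k ih =>
    simp only [stateSeqs, Finset.mem_biUnion, Finset.mem_univ, true_and, Finset.mem_image, ih]
    constructor
    · rintro ⟨i, y, ⟨h1, -⟩, rfl⟩
      simp [h1]
    · rintro ⟨h1, h2⟩
      match x, h1, h2 with
      | a :: b :: l, h1, h2 =>
        exact ⟨b, b :: l, ⟨by simpa using h1, rfl⟩, by simpa using h2.symm⟩

lemma sum_prob_le_one (hnn : ∀ i j, 0 ≤ P i j) (hcol : ∀ j, ∑ i, P i j = 1) (k : ℕ)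
    (v : Fin n) : ∑ x ∈ stateSeqs n k v, PProb P x ≤ 1 := by
  induction k generalizing v with
  | zero => simp [stateSeqs, PProb_singleton]
  | succ k ih =>
    calc ∑ x ∈ stateSeqs n (k + 1) v, PProb P x
        ≤ ∑ i, ∑ x ∈ (stateSeqs n k i).image (List.cons v), PProb P x := by
          rw [stateSeqs, Finset.sum_biUnion]
          intro i _ j _ hij
          simp only [Function.onFun]
          rw [Finset.disjoint_left]
          intro x hx hx'
          simp only [Finset.mem_image, mem_stateSeqs] at hx hx'
          obtain ⟨y, ⟨-, hy⟩, rfl⟩ := hx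
          obtain ⟨z, ⟨-, hz⟩, hzy⟩ := hx'
          obtain rfl : z = y := by simpa using hzy
          rw [hy] at hz
          exact hij (Option.some.inj hz)
      _ = ∑ i, P i v * ∑ x ∈ stateSeqs n k i, PProb P x := by
          refine Finset.sum_congr rfl fun i _ => ?_
          rw [Finset.sum_image (List.cons_injective.injOn), Finset.mul_sum]
          refine Finset.sum_congr rfl fun x hx => ?_
          exact PProb_cons v i x ((mem_stateSeqs k i x).1 hx).2
      _ ≤ ∑ i, P i v * 1 :=
          Finset.sum_le_sum fun i _ => mul_le_mul_of_nonneg_left (ih i) (hnn i v)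
      _ = 1 := by simp [hcol]

/-- Sequences with at most `L` transitions from `v` have total probability at most `L + 1`. -/
lemma sum_prob_le (hnn : ∀ i j, 0 ≤ P i j) (hcol : ∀ j, ∑ i, P i j = 1) (L : ℕ) (v : Fin n)
    (S : Finset (List (Fin n)))
    (hS : ∀ x ∈ S, x.head? = some v ∧ x.length - 1 ≤ L) :
    ∑ x ∈ S, PProb P x ≤ L + 1 := by
  calc ∑ x ∈ S, PProb P x
      ≤ ∑ x ∈ (Finset.range (L + 1)).biUnion (fun k => stateSeqs n k v), PProb P x := by
        refine Finset.sum_le_sum_of_subset_of_nonneg ?_ fun x _ _ => PProb_nonneg hnn x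
        intro x hx
        obtain ⟨h1, h2⟩ := hS x hx
        have h3 : x.length ≠ 0 := by
          intro h
          rw [List.length_eq_zero_iff] at h
          simp [h] at h1
        simp only [Finset.mem_biUnion, Finset.mem_range, mem_stateSeqs]
        exact ⟨x.length - 1, by omega, by omega, h1⟩
    _ = ∑ k ∈ Finset.range (L + 1), ∑ x ∈ stateSeqs n k v, PProb P x := by
        apply Finset.sum_biUnion
        intro i _ j _ hij
        simp only [Function.onFun]
        rw [Finset.disjoint_left]
        intro x hx hx'
        rw [mem_stateSeqs] at hx hx'
        omega
    _ ≤ ∑ k ∈ Finset.range (L + 1), (1 : ℝ) :=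
        Finset.sum_le_sum fun k _ => sum_prob_le_one hnn hcol k v
    _ = L + 1 := by simp

/-- If every state has a path to `w` of probability at least `c₀`, and all positive entries of `P`
lie in `[m, q]`, then for `c₀ * m * q ^ k ≤ δ ≤ c₀` at least `c₀ * m / δ` paths from `v`
to `w` have probability at least `δ`. When `q < 1`, every `δ ∈ (0, c₀]` is covered by some `k`. -/
lemma exists_many_paths (hnn : ∀ i j, 0 ≤ P i j) (hcol : ∀ j, ∑ i, P i j = 1) {w : Fin n}
    {m q c₀ : ℝ} (hm : 0 < m) (hmP : ∀ i j, 0 < P i j → m ≤ P i j)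
    (hq0 : 0 < q) (hqP : ∀ i j, P i j ≤ q) (hc₀ : 0 < c₀)
    (hpath : ∀ v, ∃ x ∈ PPath P v w, c₀ ≤ PProb P x) (k : ℕ) (v : Fin n) (δ : ℝ)
    (hδ : δ ≤ c₀) (hk : c₀ * m * q ^ k ≤ δ) :
    ∃ S : Finset (List (Fin n)), (∀ x ∈ S, x ∈ PPath P v w ∧ δ ≤ PProb P x) ∧
      c₀ * m / δ ≤ S.card := by
  -- For `c₀ * m ≤ δ ≤ c₀` a single path suffices.
  have base : ∀ (v : Fin n) (δ : ℝ), δ ≤ c₀ → c₀ * m ≤ δ → ∃ S : Finset (List (Fin n)),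
      (∀ x ∈ S, x ∈ PPath P v w ∧ δ ≤ PProb P x) ∧ c₀ * m / δ ≤ S.card := by
    intro v δ hδ h
    have hδ0 : 0 < δ := lt_of_lt_of_le (by positivity) h
    obtain ⟨x, hx, hxc⟩ := hpath v
    refine ⟨{x}, ?_, ?_⟩
    · intro y hy
      rw [Finset.mem_singleton] at hy
      subst hy
      exact ⟨hx, hδ.trans hxc⟩
    · simpa using (div_le_one hδ0).2 h
  induction k generalizing v δ with
  | zero => exact base v δ hδ (by simpa using hk)
  | succ k ih =>
    have hδ0 : 0 < δ := lt_of_lt_of_le (by positivity) hk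
    by_cases hb : c₀ * m ≤ δ
    · exact base v δ hδ hb
    push Not at hb
    have step : ∀ i, ∃ S : Finset (List (Fin n)), 0 < P i v →
        (∀ x ∈ S, x ∈ PPath P i w ∧ δ / P i v ≤ PProb P x) ∧ c₀ * m / (δ / P i v) ≤ S.card := by
      intro i
      by_cases hi : 0 < P i v
      · have h1 : δ / P i v ≤ c₀ := by
          rw [div_le_iff₀ hi]
          exact hb.le.trans (mul_le_mul_of_nonneg_left (hmP i v hi) hc₀.le)
        have h2 : c₀ * m * q ^ k ≤ δ / P i v := by
          rw [le_div_iff₀ hi]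
          refine le_trans ?_ hk
          rw [pow_succ, ← mul_assoc]
          exact mul_le_mul_of_nonneg_left (hqP i v) (by positivity)
        obtain ⟨S, hS⟩ := ih i (δ / P i v) h1 h2
        exact ⟨S, fun _ => hS⟩
      · exact ⟨∅, fun h => absurd h hi⟩
    choose S hS using step
    refine ⟨(Finset.univ.filter fun i => 0 < P i v).biUnion
      fun i => (S i).image (List.cons v), ?_, ?_⟩
    · intro x hx
      simp only [Finset.mem_biUnion, Finset.mem_filter, Finset.mem_univ, true_and,
        Finset.mem_image] at hx
      obtain ⟨i, hi, y, hy, rfl⟩ := hx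
      obtain ⟨hy1, hy2⟩ := (hS i hi).1 y hy
      refine ⟨cons_mem_PPath hy1 hi, ?_⟩
      rw [PProb_cons v i y hy1.2.2.1, mul_comm]
      exact (div_le_iff₀ hi).1 hy2
    · rw [Finset.card_biUnion]
      · push_cast
        calc c₀ * m / δ = ∑ i, c₀ * m / δ * P i v := by
              rw [← Finset.mul_sum, hcol, mul_one]
          _ = ∑ i ∈ Finset.univ.filter (fun i => 0 < P i v), c₀ * m / δ * P i v := by
              symm
              apply Finset.sum_subset (Finset.filter_subset _ _)
              intro i _ hi
              simp only [Finset.mem_filter, Finset.mem_univ, true_and, not_lt] at hi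
              rw [le_antisymm hi (hnn i v), mul_zero]
          _ ≤ _ := by
              refine Finset.sum_le_sum fun i hi => ?_
              have hi' : 0 < P i v := by simpa using hi
              rw [Finset.card_image_of_injective _ List.cons_injective]
              refine le_trans (le_of_eq ?_) (hS i hi').2
              field_simp
      · intro i hi j hj hij
        have hi' : 0 < P i v := by simpa using hi
        have hj' : 0 < P j v := by simpa using hj
        simp only [Function.onFun]
        rw [Finset.disjoint_left]
        intro x hx hx'
        simp only [Finset.mem_image] at hx hx'
        obtain ⟨y, hy, rfl⟩ := hx
        obtain ⟨z, hz, hzy⟩ := hx'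
        obtain rfl : z = y := by simpa using hzy
        have e1 := ((hS i hi').1 z hy).1.2.2.1
        have e2 := ((hS j hj').1 z hz).1.2.2.1
        rw [e1] at e2
        exact hij (Option.some.inj e2)

end PathLemmas

lemma tendsto_log_affine_div (A B : ℝ) (hA : 0 < A) :
    Tendsto (fun u : ℝ => Real.log (A * u + B) / u) atTop (𝓝 0) := by
  have hw : Tendsto (fun u : ℝ => A * u + B) atTop atTop :=
    tendsto_atTop_add_const_right _ _ (tendsto_id.const_mul_atTop hA)
  have h1 : Tendsto (fun u : ℝ => Real.log (A * u + B) / (A * u + B)) atTop (𝓝 0) :=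
    (Real.isLittleO_log_id_atTop.tendsto_div_nhds_zero).comp hw
  have h2 : Tendsto (fun u : ℝ => A + B / u) atTop (𝓝 (A + 0)) :=
    tendsto_const_nhds.add (tendsto_const_nhds.div_atTop tendsto_id)
  have h3 := h1.mul h2
  rw [zero_mul] at h3
  refine h3.congr' ?_
  filter_upwards [eventually_gt_atTop 0, hw.eventually_gt_atTop 0] with u hu hu'
  field_simp

/-- let `P` be an irreducible column-stochastic matrix all of
whose positive entries are `< 1`.  Fix states `v₁, v₂` and enumerate the paths
from `v₁` to `v₂` bijectively as `x₀, x₁, x₂, …` in nonincreasing order of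
probability.  Then `lim_{r→∞} (−log Pr(x_r)) / log r = 1`, i.e. the path
probabilities obey an asymptotic power law `Pr(x_r) ≈ r⁻¹`. -/
theorem stmt18 (n : ℕ) (P : Matrix (Fin n) (Fin n) ℝ)
    (hnn : ∀ i j, 0 ≤ P i j)
    (hcol : ∀ j, ∑ i, P i j = 1)
    (hlt : ∀ i j, 0 < P i j → P i j < 1)
    (hirr : ∀ i j, ∃ k : ℕ, 1 ≤ k ∧ 0 < (P ^ k) i j)
    (v₁ v₂ : Fin n)
    (φ : ℕ → ↥(PPath P v₁ v₂)) (hφ : Function.Bijective φ)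
    (hmono : Antitone fun r : ℕ => PProb P (φ r : List (Fin n))) :
    Tendsto (fun r : ℕ => -Real.log (PProb P (φ r : List (Fin n))) / Real.log r)
      atTop (nhds 1) := by
  have hpos : ∀ r, 0 < PProb P (φ r : List (Fin n)) := fun r =>
    PProb_pos_of_chain _ (φ r).2.2.1
  -- Uniform bounds `m ≤ P i j` (on the support) and `P i j ≤ q < 1`.
  have hlt' : ∀ i j, P i j < 1 := fun i j => by
    rcases (hnn i j).lt_or_eq with h | h
    · exact hlt i j h
    · rw [← h]; exact one_pos
  have hne : Nonempty (Fin n × Fin n) := ⟨(v₁, v₁)⟩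
  obtain ⟨q, hq0, hq1, hqP⟩ : ∃ q : ℝ, 0 < q ∧ q < 1 ∧ ∀ i j, P i j ≤ q := by
    obtain ⟨a, ha⟩ := Finite.exists_max (fun z : Fin n × Fin n => P z.1 z.2)
    refine ⟨max (P a.1 a.2) (1 / 2), by positivity, max_lt (hlt' _ _) (by norm_num), ?_⟩
    exact fun i j => (ha (i, j)).trans (le_max_left _ _)
  obtain ⟨m, hm, hmP⟩ : ∃ m : ℝ, 0 < m ∧ ∀ i j, 0 < P i j → m ≤ P i j := by
    obtain ⟨a, ha⟩ := Finite.exists_min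
      (fun z : Fin n × Fin n => if 0 < P z.1 z.2 then P z.1 z.2 else 1)
    refine ⟨if 0 < P a.1 a.2 then P a.1 a.2 else 1, ?_, ?_⟩
    · split_ifs with h
      · exact h
      · exact one_pos
    · intro i j hij
      simpa [hij] using ha (i, j)
  obtain ⟨c₀, hc₀, hpath⟩ : ∃ c₀ : ℝ, 0 < c₀ ∧
      ∀ v, ∃ x ∈ PPath P v v₂, c₀ ≤ PProb P x := by
    have hex : ∀ v, ∃ x, x ∈ PPath P v v₂ := by
      intro v
      obtain ⟨k, hk, hkp⟩ := hirr v₂ v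
      obtain ⟨k, rfl⟩ : ∃ k', k = k' + 1 := ⟨k - 1, by omega⟩
      exact exists_path_of_pow_pos hnn k v₂ v hkp
    choose x hx using hex
    have : Nonempty (Fin n) := ⟨v₁⟩
    obtain ⟨a, ha⟩ := Finite.exists_min (fun v => PProb P (x v))
    exact ⟨PProb P (x a), PProb_pos_of_chain _ (hx a).2.1, fun v => ⟨x v, hx v, ha v⟩⟩
  obtain ⟨K, hK, hlow⟩ : ∃ K : ℝ, 0 < K ∧
      ∀ r : ℕ, 1 ≤ r → K ≤ r * PProb P (φ r : List (Fin n)) := by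
    refine ⟨min (c₀ / 2) (c₀ * m / 2), by positivity, fun r hr => ?_⟩
    have hr' : (1 : ℝ) ≤ r := by exact_mod_cast hr
    set p := PProb P (φ r : List (Fin n)) with hp
    have hp0 : 0 < p := hpos r
    by_cases hpc : c₀ ≤ 2 * p
    · refine (min_le_left _ _).trans ?_
      nlinarith
    · push Not at hpc
      refine (min_le_right _ _).trans ?_
      obtain ⟨k, hk⟩ := exists_pow_lt_of_lt_one (show 0 < 2 * p / (c₀ * m) by positivity) hq1
      rw [lt_div_iff₀ (by positivity), mul_comm] at hk
      obtain ⟨S, hS, hcard⟩ := exists_many_paths hnn hcol hm hmP hq0 hqP hc₀ hpath k v₁ (2 * p)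
        hpc.le hk.le
      -- Paths of probability `≥ 2 * p > p` all occur before index `r`.
      have hsub : S ⊆ (Finset.range r).image fun s => (φ s : List (Fin n)) := by
        intro x hx
        obtain ⟨hx1, hx2⟩ := hS x hx
        obtain ⟨s, hs⟩ := hφ.2 ⟨x, hx1⟩
        refine Finset.mem_image.2 ⟨s, Finset.mem_range.2 ?_, by rw [hs]⟩
        by_contra hsr
        have h := hmono (not_lt.1 hsr)
        simp only [hs] at h
        linarith
      have hSr : S.card ≤ r :=
        (Finset.card_le_card hsub).trans (Finset.card_image_le.trans (by simp))
      have h2 : c₀ * m / (2 * p) ≤ r := hcard.trans (by exact_mod_cast hSr)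
      rw [div_le_iff₀ (by positivity)] at h2
      linarith
  set a : ℝ := -Real.log q with ha
  have ha0 : 0 < a := neg_pos.2 (Real.log_neg hq0 hq1)
  have hup : ∀ r : ℕ, (r + 1) * PProb P (φ r : List (Fin n)) ≤
      -Real.log (PProb P (φ r : List (Fin n))) / a + 2 := by
    intro r
    have hlen : ∀ s, ((φ s : List (Fin n)).length - 1 : ℕ) * a ≤
        -Real.log (PProb P (φ s : List (Fin n))) := by
      intro s
      have h := Real.log_le_log (hpos s) (PProb_le_pow hnn hq0.le hqP (φ s : List (Fin n)))
      rw [Real.log_pow] at h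
      rw [ha]
      linarith
    set p := PProb P (φ r : List (Fin n)) with hp
    have hinj : Function.Injective fun s => (φ s : List (Fin n)) :=
      Subtype.val_injective.comp hφ.1
    have hsum := sum_prob_le hnn hcol ⌈-Real.log p / a⌉₊ v₁
      ((Finset.range (r + 1)).image fun s => (φ s : List (Fin n))) (by
        intro x hx
        obtain ⟨s, hs, rfl⟩ := Finset.mem_image.1 hx
        refine ⟨(φ s).2.2.2.1, ?_⟩
        have hsr : s ≤ r := by simpa [Nat.lt_succ_iff] using hs
        have h1 : p ≤ PProb P (φ s : List (Fin n)) := hmono hsr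
        have h2 := Real.log_le_log (hpos r) h1
        have h3 := hlen s
        have h4 : (((φ s : List (Fin n)).length - 1 : ℕ) : ℝ) ≤ -Real.log p / a := by
          rw [le_div_iff₀ ha0]
          linarith
        exact_mod_cast h4.trans (Nat.le_ceil _))
    rw [Finset.sum_image hinj.injOn] at hsum
    have h5 : (r + 1) * p ≤ ∑ s ∈ Finset.range (r + 1), PProb P (φ s : List (Fin n)) := by
      have := Finset.card_nsmul_le_sum (Finset.range (r + 1))
        (fun s => PProb P (φ s : List (Fin n))) p
        (fun s hs => hmono (by simpa [Nat.lt_succ_iff] using hs))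
      simpa using this
    have hnonneg : 0 ≤ -Real.log p / a :=
      div_nonneg (le_trans (by positivity) (hlen r)) ha0.le
    have h6 := Nat.ceil_lt_add_one hnonneg
    linarith
  have hlogr : Tendsto (fun r : ℕ => Real.log r) atTop atTop :=
    Real.tendsto_log_atTop.comp tendsto_natCast_atTop_atTop
  have hL : Tendsto (fun r : ℕ => 1 - Real.log (1 / a * Real.log r + (-Real.log K / a + 2)) /
      Real.log r) atTop (𝓝 1) := by
    have := ((tendsto_log_affine_div (1 / a) (-Real.log K / a + 2) (by positivity)).comp
      hlogr).const_sub 1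
    simpa using this
  have hU : Tendsto (fun r : ℕ => 1 + -Real.log K / Real.log r) atTop (𝓝 1) := by
    have := (hlogr.const_div_atTop (-Real.log K)).const_add 1
    simpa using this
  refine tendsto_of_tendsto_of_tendsto_of_le_of_le' hL hU ?_ ?_
  · filter_upwards [eventually_ge_atTop 1, hlogr.eventually_gt_atTop 0] with r hr hu
    have hr0 : (0 : ℝ) < r := by exact_mod_cast hr
    have h1 := Real.log_le_log hK (hlow r hr)
    rw [Real.log_mul hr0.ne' (hpos r).ne'] at h1
    have h2 : r * PProb P (φ r : List (Fin n)) ≤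
        1 / a * Real.log r + (-Real.log K / a + 2) := by
      calc r * PProb P (φ r : List (Fin n)) ≤ (r + 1) * PProb P (φ r : List (Fin n)) := by
            nlinarith [hpos r]
        _ ≤ _ := hup r
        _ ≤ (Real.log r - Real.log K) / a + 2 := by
            have := div_le_div_of_nonneg_right
              (show -Real.log (PProb P (φ r : List (Fin n))) ≤ Real.log r - Real.log K by
                linarith) ha0.le
            linarith
        _ = _ := by ring
    have h3 := Real.log_le_log (mul_pos hr0 (hpos r)) h2
    rw [Real.log_mul hr0.ne' (hpos r).ne'] at h3
    rw [le_div_iff₀ hu, sub_mul, div_mul_cancel₀ _ hu.ne']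
    linarith
  · filter_upwards [eventually_ge_atTop 1, hlogr.eventually_gt_atTop 0] with r hr hu
    have hr0 : (0 : ℝ) < r := by exact_mod_cast hr
    have h1 := Real.log_le_log hK (hlow r hr)
    rw [Real.log_mul hr0.ne' (hpos r).ne'] at h1
    rw [div_le_iff₀ hu, add_mul, div_mul_cancel₀ _ hu.ne']
    linarith
end
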